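/- For every real x with −1/4 < x < 1/4: (1/48)·∑_{n=0}^∞ (3/4)^{3(n+x)} · (1/2)_{n+x}³ (1/3)_{n+x} (2/3)_{n+x} / (1)_{n+x}⁵ · (74(n+x)² + 27(n+x) + 3) = (1/π²)·(8 cos⁴πx − 8 cos²πx + 3)/(4 cos⁴πx − cos²πx) + (3/4)^{3x} · (1/2)_x³ (1/3)_x (2/3)_x / (1)_x⁵ · (128x⁵/(3(2x−1)³)) · ∑_{n=0}^∞ [ (1/2+x)_n / (3/2−x)_n ]³, where both series converge. -/

import Mathlib

/-- The Pochhammer symbol for real index: `(a)_t = Γ(a+t)/Γ(a)`. -/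
noncomputable def pochG (a t : ℝ) : ℝ := Real.Gamma (a + t) / Real.Gamma a

/-- The Pochhammer symbol (rising factorial) `(a)_n = a (a+1) ⋯ (a+n-1)` for real `a`. -/
def pochR (a : ℝ) (n : ℕ) : ℝ := ∏ j ∈ Finset.range n, (a + j)

/-!
Write `r(z) = Γ(z + x) / Γ(z + 1 - x)` and let `0 < |x| < 1/4`. A Wilf–Zeilberger pair shows that

  `F(z) = (z - x)³ r(z)³ ∑ₙ wzTerm x n z + (16/3) x⁵ wzCoeff x 0 ∑ₖ r(z + k)³`

is `1`-periodic on the strip `1/4 < Re z < 2`. It grows there more slowly than `exp(4π |Im z|)`, so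
`F(z) = c₀ + c₁ e^{2πiz} + c₂ e^{-2πiz}`. Up to terms that vanish as `Im z → ∞`, the function
`sin³(π(z + x)) F(z)` is symmetric under `z ↦ 1 - z`; this gives two linear relations between the
`cᵢ`, so that `F(1/2)` is an explicit trigonometric multiple of `F(1 + x)`.

At `z = 1/2` the function `F` is a Gamma factor times the difference of the two series in question.
At `z = 1 + x` the first sum collapses to its term `n = 0`, the second is a well-poised `₃F₂(1)`
evaluated by Dixon's theorem, and the reflection, duplication and triplication formulas reduce the
resulting Gamma factors to `sin` and `cos`. The case `x = 0` follows by continuity.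
-/

open Filter Topology

section GaussMultiplication

/-- The candidate for `Γ` in Gauss's multiplication formula: the product of `Γ ((s + k) / n)` over
`k < n`, scaled so that the functional equation holds and the value at `1` is `1`. -/
noncomputable def gaussGamma (n : ℕ) (s : ℝ) : ℝ :=
  n ^ (s - 1) * ∏ k ∈ Finset.range n, Real.Gamma ((s + k) / n) / Real.Gamma ((1 + k) / n)

theorem convexOn_log_Gamma_affine {a b : ℝ} (ha : 0 < a) (hb : 0 ≤ b) :
    ConvexOn ℝ (Set.Ioi 0) fun s => Real.log (Real.Gamma ((s + b) / a)) := by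
  refine ⟨convex_Ioi _, fun u (hu : 0 < u) v (hv : 0 < v) p q hp hq hpq => ?_⟩
  have hconv := Real.convexOn_log_Gamma.2 (x := (u + b) / a) (y := (v + b) / a)
    (Set.mem_Ioi.2 (by positivity)) (Set.mem_Ioi.2 (by positivity)) hp hq hpq
  have hcomb : (p • u + q • v + b) / a = p • ((u + b) / a) + q • ((v + b) / a) := by
    simp only [smul_eq_mul]
    linear_combination (-b / a) * hpq
  simpa only [hcomb, Function.comp_apply] using hconv

variable {n : ℕ}

theorem gaussGamma_pos (hn : n ≠ 0) {s : ℝ} (hs : 0 < s) : 0 < gaussGamma n s := by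
  have hn' : 0 < (n : ℝ) := Nat.cast_pos.2 (Nat.pos_of_ne_zero hn)
  exact mul_pos (Real.rpow_pos_of_pos hn' _) (Finset.prod_pos fun k _ =>
    div_pos (Real.Gamma_pos_of_pos (by positivity)) (Real.Gamma_pos_of_pos (by positivity)))

theorem gaussGamma_one (hn : n ≠ 0) : gaussGamma n 1 = 1 := by
  have : 0 < (n : ℝ) := Nat.cast_pos.2 (Nat.pos_of_ne_zero hn)
  rw [gaussGamma, sub_self, Real.rpow_zero, one_mul]
  exact Finset.prod_eq_one fun k _ => div_self (Real.Gamma_pos_of_pos (by positivity)).ne'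

theorem gaussGamma_add_one (hn : n ≠ 0) {s : ℝ} (hs : 0 < s) :
    gaussGamma n (s + 1) = s * gaussGamma n s := by
  have hn' : 0 < (n : ℝ) := Nat.cast_pos.2 (Nat.pos_of_ne_zero hn)
  have hshift : (∏ k ∈ Finset.range n, Real.Gamma ((s + 1 + k) / n)) =
      s / n * ∏ k ∈ Finset.range n, Real.Gamma ((s + k) / n) := by
    have hlast : Real.Gamma ((s + n) / n) = s / n * Real.Gamma (s / n) := by
      rw [add_div, div_self hn'.ne', Real.Gamma_add_one (div_pos hs hn').ne']
    have hsucc := Finset.prod_range_succ (fun k : ℕ => Real.Gamma ((s + k) / n)) n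
    rw [Finset.prod_range_succ', hlast, Nat.cast_zero, add_zero] at hsucc
    refine mul_right_cancel₀ (Real.Gamma_pos_of_pos (div_pos hs hn')).ne' ?_
    simp only [Nat.cast_add_one, add_right_comm s 1, ← add_assoc] at hsucc ⊢
    linear_combination hsucc
  simp only [gaussGamma, Finset.prod_div_distrib]
  rw [hshift, add_sub_right_comm, Real.rpow_add_one hn'.ne']
  field_simp

theorem convexOn_log_gaussGamma (hn : n ≠ 0) :
    ConvexOn ℝ (Set.Ioi 0) (Real.log ∘ gaussGamma n) := by
  have hn' : 0 < (n : ℝ) := Nat.cast_pos.2 (Nat.pos_of_ne_zero hn)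
  have hpos : ∀ {s : ℝ}, 0 < s → ∀ k : ℕ, Real.Gamma ((s + k) / n) ≠ 0 := fun hs k =>
    (Real.Gamma_pos_of_pos (by positivity)).ne'
  have hlog : ∀ s ∈ Set.Ioi (0 : ℝ), (Real.log ∘ gaussGamma n) s =
      s * Real.log n + ∑ k ∈ Finset.range n, Real.log (Real.Gamma ((s + k) / n)) +
        (-Real.log n - ∑ k ∈ Finset.range n, Real.log (Real.Gamma ((1 + k) / n))) := by
    intro s hs
    have hne : ∀ k ∈ Finset.range n,
        Real.Gamma ((s + k) / n) / Real.Gamma ((1 + k) / n) ≠ 0 := fun k _ =>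
      div_ne_zero (hpos hs k) (hpos one_pos k)
    simp only [Function.comp_apply, gaussGamma]
    rw [Real.log_mul (Real.rpow_pos_of_pos hn' _).ne' (Finset.prod_ne_zero_iff.2 hne),
      Real.log_rpow hn', Real.log_prod hne, Finset.sum_congr rfl fun k _ =>
        Real.log_div (hpos hs k) (hpos one_pos k), Finset.sum_sub_distrib]
    ring
  have hlin : ConvexOn ℝ (Set.Ioi 0) fun s : ℝ => s * Real.log n :=
    ((LinearMap.id (R := ℝ)).smulRight (Real.log n)).convexOn (convex_Ioi 0)
  have hsum : ConvexOn ℝ (Set.Ioi 0) fun s : ℝ =>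
      ∑ k ∈ Finset.range n, Real.log (Real.Gamma ((s + k) / n)) := by
    simpa only [Finset.sum_fn] using Finset.sum_induction (s := Finset.range n)
      (fun k s => Real.log (Real.Gamma ((s + k) / n))) (ConvexOn ℝ (Set.Ioi 0))
      (fun _ _ => ConvexOn.add) (convexOn_const 0 (convex_Ioi 0))
      fun k _ => convexOn_log_Gamma_affine hn' k.cast_nonneg
  exact ((hlin.add hsum).add_const _).congr fun s hs => (hlog s hs).symm

theorem gaussGamma_eq_Gamma (hn : n ≠ 0) {s : ℝ} (hs : 0 < s) :
    gaussGamma n s = Real.Gamma s :=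
  Real.eq_Gamma_of_log_convex (convexOn_log_gaussGamma hn) (gaussGamma_add_one hn)
    (gaussGamma_pos hn) (gaussGamma_one hn) hs

theorem Gamma_triplication {x : ℝ} (hx : -1 / 3 < x) :
    (27 : ℝ) ^ x * Real.Gamma (1 / 3 + x) * Real.Gamma (2 / 3 + x) * Real.Gamma (1 + x) =
      Real.Gamma (1 / 3) * Real.Gamma (2 / 3) * Real.Gamma (1 + 3 * x) := by
  have h₁ : Real.Gamma (1 / 3) ≠ 0 := (Real.Gamma_pos_of_pos (by norm_num)).ne'
  have h₂ : Real.Gamma (2 / 3) ≠ 0 := (Real.Gamma_pos_of_pos (by norm_num)).ne'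
  have hpow : (3 : ℝ) ^ (3 * x) = 27 ^ x := by
    rw [Real.rpow_mul (by norm_num)]
    norm_num
  have h := gaussGamma_eq_Gamma three_ne_zero (s := 1 + 3 * x) (by linarith)
  norm_num [gaussGamma, Finset.prod_range_succ, hpow] at h
  rw [← h, show (1 + 3 * x) / 3 = 1 / 3 + x by ring, show (1 + 3 * x + 1) / 3 = 2 / 3 + x by ring,
    show (1 + 3 * x + 2) / 3 = 1 + x by ring]
  field_simp

end GaussMultiplication

section Pochhammer

variable {a : ℝ}

theorem pochR_zero (a : ℝ) : pochR a 0 = 1 :=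
  Finset.prod_range_zero _

theorem pochR_succ (a : ℝ) (n : ℕ) : pochR a (n + 1) = pochR a n * (a + n) :=
  Finset.prod_range_succ _ _

theorem pochR_pos (ha : 0 < a) (n : ℕ) : 0 < pochR a n :=
  Finset.prod_pos fun j _ => by positivity

theorem mul_pochR_add_one (a : ℝ) (n : ℕ) : a * pochR (a + 1) n = pochR a n * (a + n) := by
  rw [← pochR_succ, pochR, pochR, Finset.prod_range_succ', Nat.cast_zero, add_zero, mul_comm]
  simp only [Nat.cast_add_one, add_assoc, add_comm (1 : ℝ)]

theorem pochR_add_one (ha : a ≠ 0) (n : ℕ) : pochR (a + 1) n = pochR a n * (a + n) / a := by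
  rw [← mul_pochR_add_one, mul_div_cancel_left₀ _ ha]

theorem sq_pochR_div_pochR_one_mul_le (ha : |a| ≤ 1 / 2) (k : ℕ) :
    (pochR a k / pochR 1 k) ^ 2 * (k + 1) ≤ 1 := by
  induction k with
  | zero => simp [pochR_zero]
  | succ k ih =>
    have : (0 : ℝ) ≤ k := k.cast_nonneg
    obtain ⟨ha₁, ha₂⟩ := abs_le.1 ha
    have hsq : (a + k) ^ 2 ≤ (k + 1 / 2) ^ 2 := sq_le_sq' (by linarith) (by linarith)
    have hstep : ((a + k) / (1 + k)) ^ 2 * (k + 1 + 1) ≤ k + 1 := by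
      rw [div_pow, div_mul_eq_mul_div, div_le_iff₀ (by positivity)]
      nlinarith [mul_le_mul_of_nonneg_right hsq (by positivity : (0 : ℝ) ≤ k + 1 + 1)]
    calc (pochR a (k + 1) / pochR 1 (k + 1)) ^ 2 * ((k + 1 : ℕ) + 1)
        = (pochR a k / pochR 1 k) ^ 2 * (((a + k) / (1 + k)) ^ 2 * (k + 1 + 1)) := by
          rw [pochR_succ, pochR_succ, mul_div_mul_comm, mul_pow, mul_assoc, Nat.cast_add_one]
      _ ≤ (pochR a k / pochR 1 k) ^ 2 * (k + 1) := by gcongr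
      _ ≤ 1 := ih

theorem abs_pochR_div_pochR_one_pow_three_le (ha : |a| ≤ 1 / 2) (k : ℕ) :
    |pochR a k / pochR 1 k| ^ 3 ≤ ((k : ℝ) + 1) ^ (-(3 / 2) : ℝ) := by
  have hk : (0 : ℝ) < k + 1 := by positivity
  have hsq : |pochR a k / pochR 1 k| ^ 2 ≤ ((k : ℝ) + 1)⁻¹ := by
    rw [sq_abs, ← one_div, le_div_iff₀ hk]
    exact sq_pochR_div_pochR_one_mul_le ha k
  have hp : 0 ≤ |pochR a k / pochR 1 k| := abs_nonneg _
  generalize |pochR a k / pochR 1 k| = p at hsq hp ⊢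
  calc p ^ 3 = (p ^ 2) ^ (3 / 2 : ℝ) := by
        rw [← Real.rpow_natCast p 2, ← Real.rpow_mul hp, ← Real.rpow_natCast]
        norm_num
    _ ≤ (((k : ℝ) + 1)⁻¹) ^ (3 / 2 : ℝ) := by gcongr
    _ = ((k : ℝ) + 1) ^ (-(3 / 2) : ℝ) := by rw [Real.inv_rpow hk.le, Real.rpow_neg hk.le]

theorem GammaSeq_eq_div_pochR (s : ℝ) (n : ℕ) :
    Real.GammaSeq s n = (n : ℝ) ^ s * n.factorial / pochR s (n + 1) :=
  rfl

end Pochhammer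

section Dixon

/-- The hypergeometric part of the `k`-th term of the well-poised series with parameters
`a = 2x + N`, `b = c = 2x`, `d = x`. The integer `N` is the shift along which the sum is moved to
infinity. -/
noncomputable def wellPoised (x : ℝ) (N k : ℕ) : ℝ :=
  pochR (2 * x + N + 1) k * pochR (2 * x) k ^ 2 * pochR x k /
    (pochR 1 k * pochR (1 + N) k ^ 2 * pochR (1 + N + x) k)

/-- The `k`-th term of the very-well-poised series with parameters `a = 2x + N`, `b = c = 2x`,
`d = x`. -/
noncomputable def veryWellPoised (x : ℝ) (N k : ℕ) : ℝ :=
  (2 * x + N + 2 * k) / (2 * x + N + k) * wellPoised x N k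

/-- The ratio of the sums of the very-well-poised series with shifts `N` and `N + 1`. -/
noncomputable def dixonRatio (x : ℝ) (N : ℕ) : ℝ :=
  (1 + 2 * x + N) * (1 - 2 * x + N) * (1 - x + N) ^ 2 /
    ((1 + N) ^ 2 * (1 + x + N) * (1 - 3 * x + N))

/-- The telescoping certificate for the recursion in `N` of the very-well-poised series. -/
noncomputable def wellPoisedCert (x : ℝ) (N k : ℕ) : ℝ :=
  -(wellPoised x N k * (k * (k + 2 * x + N + (1 - 3 * x + N)) /
    ((1 - 3 * x + N) * (2 * x + N + k))))

variable {x : ℝ}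

theorem two_mul_add_natCast_ne_zero (hx : x ≠ 0) (hx₁ : -1 / 4 < x) (k : ℕ) :
    2 * x + k ≠ 0 := by
  rcases Nat.eq_zero_or_pos k with rfl | hk
  · simpa only [Nat.cast_zero, add_zero, ne_eq, mul_eq_zero, OfNat.ofNat_ne_zero, false_or] using hx
  · have : (1 : ℝ) ≤ k := Nat.one_le_cast.2 hk
    linarith

theorem wellPoised_succ_right (x : ℝ) (N k : ℕ) : wellPoised x N (k + 1) =
    wellPoised x N k * ((2 * x + N + 1 + k) * (2 * x + k) ^ 2 * (x + k) /
      ((1 + k) * (1 + N + k) ^ 2 * (1 + N + x + k))) := by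
  simp only [wellPoised, pochR_succ]
  rw [div_mul_div_comm]
  congr 1 <;> ring

theorem wellPoised_succ_left (hx₁ : -1 / 4 < x) (N k : ℕ) :
    wellPoised x (N + 1) k = wellPoised x N k *
      ((2 * x + N + 1 + k) * (1 + N) ^ 2 * (1 + N + x) /
        ((2 * x + N + 1) * (1 + N + k) ^ 2 * (1 + N + x + k))) := by
  have : (0 : ℝ) ≤ N := N.cast_nonneg
  have h₁ : 2 * x + N + 1 ≠ 0 := by linarith
  have h₂ : 1 + N + x ≠ 0 := by linarith
  have h₃ : (1 + N : ℝ) ≠ 0 := by linarith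
  simp only [wellPoised, Nat.cast_add_one]
  rw [← add_assoc (2 * x), ← add_assoc (1 : ℝ), add_right_comm (1 + N : ℝ) 1 x,
    pochR_add_one h₁, pochR_add_one h₂, pochR_add_one h₃]
  field_simp

theorem veryWellPoised_zero_left (hx : x ≠ 0) (hx₁ : -1 / 4 < x) (k : ℕ) :
    veryWellPoised x 0 k = (pochR (2 * x) k / pochR 1 k) ^ 3 := by
  have h₁ : 2 * x + k ≠ 0 := two_mul_add_natCast_ne_zero hx hx₁ k
  have h₂ : ∀ j : ℕ, x + j ≠ 0 := fun j => by
    have := two_mul_add_natCast_ne_zero hx hx₁ (2 * j)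
    rwa [Nat.cast_mul, Nat.cast_two, ← mul_add, mul_ne_zero_iff_left two_ne_zero] at this
  have h₄ : pochR 1 k ≠ 0 := (pochR_pos one_pos k).ne'
  have h₅ : pochR x k ≠ 0 := Finset.prod_ne_zero_iff.2 fun j _ => h₂ j
  have h₆ : x + k ≠ 0 := h₂ k
  rw [veryWellPoised, wellPoised]
  simp only [Nat.cast_zero, add_zero]
  rw [pochR_add_one (mul_ne_zero two_ne_zero hx), add_comm 1 x, pochR_add_one hx]
  field_simp

theorem abs_wellPoised_zero_left_le (hx : x ≠ 0) (hx₁ : -1 / 4 < x) (k : ℕ) :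
    |wellPoised x 0 k| ≤ |pochR (2 * x) k / pochR 1 k| ^ 3 := by
  rcases Nat.eq_zero_or_pos k with rfl | hk
  · simp [wellPoised, pochR_zero]
  have hk : (1 : ℝ) ≤ k := Nat.one_le_cast.2 hk
  rw [← abs_pow, ← veryWellPoised_zero_left hx hx₁, veryWellPoised, abs_mul]
  refine le_mul_of_one_le_left (abs_nonneg _) ((le_abs_self _).trans' ?_)
  rw [Nat.cast_zero, add_zero, one_le_div (by linarith)]
  linarith

theorem antitone_abs_wellPoised (hx₁ : -1 / 4 < x) (k : ℕ) :
    Antitone fun N => |wellPoised x N k| := by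
  refine antitone_nat_of_succ_le fun N => ?_
  have : (0 : ℝ) ≤ N := N.cast_nonneg
  have : (0 : ℝ) ≤ k := k.cast_nonneg
  have h₁ : 0 < 2 * x + N + 1 := by linarith
  have h₂ : 0 < 1 + N + x := by linarith
  have hcubic : (2 * x + N + 1 + k) * (1 + N) ^ 2 ≤ (2 * x + N + 1) * (1 + N + k) ^ 2 := by
    have : 0 ≤ (1 + N) * (1 + 4 * x + N) + (2 * x + N + 1) * k := by
      have : 0 ≤ 1 + 4 * x + N := by linarith
      positivity
    linear_combination (k : ℝ) * this
  rw [wellPoised_succ_left hx₁, abs_mul]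
  refine mul_le_of_le_one_right (abs_nonneg _) ?_
  rw [abs_of_nonneg (by positivity), div_le_one (by positivity)]
  gcongr ?_ * ?_
  linarith

theorem abs_wellPoised_le_rpow (hx : x ≠ 0) (hx₁ : -1 / 4 < x) (hx₂ : x < 1 / 4) (N k : ℕ) :
    |wellPoised x N k| ≤ ((k : ℝ) + 1) ^ (-(3 / 2) : ℝ) := by
  have habs : |2 * x| ≤ 1 / 2 := abs_le.2 ⟨by linarith, by linarith⟩
  exact (antitone_abs_wellPoised hx₁ k N.zero_le).trans
    ((abs_wellPoised_zero_left_le hx hx₁ k).trans (abs_pochR_div_pochR_one_pow_three_le habs k))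

theorem abs_veryWellPoised_le (hx₁ : -1 / 4 < x) (N k : ℕ) :
    |veryWellPoised x N k| ≤ 3 * |wellPoised x N k| := by
  rw [veryWellPoised, abs_mul]
  refine mul_le_mul_of_nonneg_right ?_ (abs_nonneg _)
  have : (0 : ℝ) ≤ N := N.cast_nonneg
  rcases Nat.eq_zero_or_pos k with rfl | hk
  · rw [Nat.cast_zero, mul_zero, add_zero, abs_div]
    exact (div_self_le_one _).trans (by norm_num)
  · have hk : (1 : ℝ) ≤ k := Nat.one_le_cast.2 hk
    rw [abs_of_nonneg (div_nonneg (by linarith) (by linarith)), div_le_iff₀ (by linarith)]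
    linarith

theorem abs_veryWellPoised_le_rpow (hx : x ≠ 0) (hx₁ : -1 / 4 < x) (hx₂ : x < 1 / 4)
    (N k : ℕ) : |veryWellPoised x N k| ≤ 3 * ((k : ℝ) + 1) ^ (-(3 / 2) : ℝ) :=
  (abs_veryWellPoised_le hx₁ N k).trans
    (mul_le_mul_of_nonneg_left (abs_wellPoised_le_rpow hx hx₁ hx₂ N k) (by norm_num))

theorem summable_natCast_add_one_rpow {p : ℝ} (hp : p < -1) :
    Summable fun k : ℕ => ((k : ℝ) + 1) ^ p := by
  simpa only [Nat.cast_add_one] using (summable_nat_add_iff 1).2 (Real.summable_nat_rpow.2 hp)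

theorem summable_veryWellPoised (hx : x ≠ 0) (hx₁ : -1 / 4 < x) (hx₂ : x < 1 / 4) (N : ℕ) :
    Summable (veryWellPoised x N) :=
  Summable.of_norm_bounded ((summable_natCast_add_one_rpow (by norm_num)).mul_left 3)
    fun k => abs_veryWellPoised_le_rpow hx hx₁ hx₂ N k

theorem veryWellPoised_sub (hx : x ≠ 0) (hx₁ : -1 / 4 < x) (hx₂ : x < 1 / 4) (N k : ℕ) :
    veryWellPoised x N k - dixonRatio x N * veryWellPoised x (N + 1) k =
      wellPoisedCert x N (k + 1) - wellPoisedCert x N k := by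
  have : (0 : ℝ) ≤ N := N.cast_nonneg
  have : (0 : ℝ) ≤ k := k.cast_nonneg
  have h₀ : 2 * x + N + k ≠ 0 := by
    simpa only [Nat.cast_add, add_assoc] using two_mul_add_natCast_ne_zero hx hx₁ (N + k)
  have h₁ : 2 * x + N + 1 ≠ 0 := by linarith
  have h₂ : 2 * x + N + 1 + k ≠ 0 := by linarith
  have h₃ : 1 + x + N ≠ 0 := by linarith
  have h₄ : 1 + x + N + k ≠ 0 := by linarith
  have h₅ : 1 - 3 * x + N ≠ 0 := by linarith
  unfold wellPoisedCert veryWellPoised dixonRatio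
  rw [wellPoised_succ_right, wellPoised_succ_left hx₁]
  push_cast
  rw [← add_assoc (2 * x) (N : ℝ) 1, ← add_assoc (2 * x + N) (k : ℝ) 1,
    add_right_comm _ (k : ℝ) 1, add_right_comm 1 (N : ℝ) x]
  generalize wellPoised x N k = W
  generalize hs : 1 - 3 * x + (N : ℝ) = s at *
  field_simp
  rw [← hs]
  ring

theorem tendsto_wellPoisedCert (hx : x ≠ 0) (hx₁ : -1 / 4 < x) (hx₂ : x < 1 / 4) (N : ℕ) :
    Tendsto (wellPoisedCert x N) atTop (𝓝 0) := by
  have hmul : Tendsto (fun k : ℕ => wellPoised x N k * k) atTop (𝓝 0) := by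
    refine squeeze_zero_norm (fun k => ?_) ((tendsto_rpow_neg_atTop one_half_pos).comp
      (tendsto_atTop_add_const_right _ 1 tendsto_natCast_atTop_atTop))
    have hk : (0 : ℝ) < k + 1 := by positivity
    rw [norm_mul, Real.norm_eq_abs, Real.norm_natCast, Function.comp_apply]
    calc |wellPoised x N k| * k ≤ ((k : ℝ) + 1) ^ (-(3 / 2) : ℝ) * (k + 1) := by
          gcongr
          · exact abs_wellPoised_le_rpow hx hx₁ hx₂ N k
          · exact le_add_of_nonneg_right zero_le_one
      _ = ((k : ℝ) + 1) ^ (-(1 / 2) : ℝ) := by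
          rw [← Real.rpow_add_one hk.ne']
          norm_num
  have hratio := tendsto_add_mul_div_add_mul_atTop_nhds (2 * x + N + (1 - 3 * x + N))
    (2 * x + N) 1 (one_ne_zero (α := ℝ))
  have h := ((hmul.mul hratio).mul_const (1 - 3 * x + N)⁻¹).neg
  rw [zero_mul, zero_mul, neg_zero] at h
  refine h.congr fun k => ?_
  rw [wellPoisedCert]
  field_simp
  ring

theorem tsum_veryWellPoised_eq (hx : x ≠ 0) (hx₁ : -1 / 4 < x) (hx₂ : x < 1 / 4) (N : ℕ) :
    ∑' k, veryWellPoised x N k = dixonRatio x N * ∑' k, veryWellPoised x (N + 1) k := by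
  have hsub := ((summable_veryWellPoised hx hx₁ hx₂ N).hasSum.sub
    ((summable_veryWellPoised hx hx₁ hx₂ (N + 1)).hasSum.mul_left (dixonRatio x N))).tendsto_sum_nat
  have htelescope : (fun n => ∑ k ∈ Finset.range n, (veryWellPoised x N k -
      dixonRatio x N * veryWellPoised x (N + 1) k)) = wellPoisedCert x N := by
    ext n
    rw [Finset.sum_congr rfl fun k _ => veryWellPoised_sub hx hx₁ hx₂ N k, Finset.sum_range_sub]
    simp [wellPoisedCert]
  rw [htelescope] at hsub
  exact sub_eq_zero.1 (tendsto_nhds_unique hsub (tendsto_wellPoisedCert hx hx₁ hx₂ N))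

theorem tsum_veryWellPoised_zero_left (hx : x ≠ 0) (hx₁ : -1 / 4 < x) (hx₂ : x < 1 / 4) (n : ℕ) :
    ∑' k, veryWellPoised x 0 k =
      (∏ i ∈ Finset.range n, dixonRatio x i) * ∑' k, veryWellPoised x n k := by
  induction n with
  | zero => simp
  | succ n ih => rw [ih, Finset.prod_range_succ, tsum_veryWellPoised_eq hx hx₁ hx₂ n, mul_assoc]

theorem tendsto_wellPoised (x : ℝ) {k : ℕ} (hk : k ≠ 0) :
    Tendsto (fun N => wellPoised x N k) atTop (𝓝 0) := by
  have hprod : ∀ N : ℕ, wellPoised x N k = pochR (2 * x) k ^ 2 * pochR x k / pochR 1 k *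
      ∏ m ∈ Finset.range k, (2 * x + 1 + m + 1 * N) / (1 + x + m + 1 * N) *
        ((1 + 0 * N) / (1 + m + 1 * N) : ℝ) ^ 2 := by
    intro N
    have e₁ : pochR (2 * x + N + 1) k = ∏ m ∈ Finset.range k, (2 * x + 1 + m + 1 * N) :=
      Finset.prod_congr rfl fun m _ => by ring
    have e₂ : pochR (1 + N + x) k = ∏ m ∈ Finset.range k, (1 + x + m + 1 * N) :=
      Finset.prod_congr rfl fun m _ => by ring
    have e₃ : pochR (1 + N) k = ∏ m ∈ Finset.range k, (1 + m + 1 * N : ℝ) :=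
      Finset.prod_congr rfl fun m _ => by ring
    simp only [wellPoised, Finset.prod_mul_distrib, Finset.prod_div_distrib, Finset.prod_pow,
      zero_mul, add_zero, Finset.prod_const_one, e₁, e₂, e₃]
    ring
  have hfactor : ∀ m : ℕ, Tendsto (fun N : ℕ => (2 * x + 1 + m + 1 * N) / (1 + x + m + 1 * N) *
      ((1 + 0 * N) / (1 + m + 1 * N) : ℝ) ^ 2) atTop (𝓝 (1 / 1 * (0 / 1) ^ 2)) := fun m =>
    (tendsto_add_mul_div_add_mul_atTop_nhds _ _ 1 one_ne_zero).mul
      ((tendsto_add_mul_div_add_mul_atTop_nhds _ _ 0 one_ne_zero).pow 2)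
  have h := (tendsto_finsetProd (Finset.range k) fun m _ => hfactor m).const_mul
    (pochR (2 * x) k ^ 2 * pochR x k / pochR 1 k)
  simpa only [← hprod, Finset.prod_const, Finset.card_range, zero_div, zero_pow two_ne_zero,
    mul_zero, zero_pow hk] using h

theorem tendsto_tsum_veryWellPoised (hx : x ≠ 0) (hx₁ : -1 / 4 < x) (hx₂ : x < 1 / 4) :
    Tendsto (fun N => ∑' k, veryWellPoised x N k) atTop (𝓝 1) := by
  rw [← tsum_ite_eq 0 fun _ => (1 : ℝ)]
  refine tendsto_tsum_of_dominated_convergence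
    ((summable_natCast_add_one_rpow (by norm_num)).mul_left 3) (fun k => ?_)
    (Eventually.of_forall fun N k => abs_veryWellPoised_le_rpow hx hx₁ hx₂ N k)
  split_ifs with hk
  · subst hk
    refine tendsto_const_nhds.congr fun N => ?_
    simp [veryWellPoised, wellPoised, pochR_zero, two_mul_add_natCast_ne_zero hx hx₁]
  · refine squeeze_zero_norm (fun N => abs_veryWellPoised_le hx₁ N k) ?_
    simpa only [abs_zero, mul_zero] using (tendsto_wellPoised x hk).abs.const_mul 3

theorem prod_dixonRatio (x : ℝ) (n : ℕ) :
    ∏ i ∈ Finset.range n, dixonRatio x i =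
      pochR (1 + 2 * x) n * pochR (1 - 2 * x) n * pochR (1 - x) n ^ 2 /
        (pochR 1 n ^ 2 * pochR (1 + x) n * pochR (1 - 3 * x) n) := by
  simp only [dixonRatio, pochR, Finset.prod_div_distrib, Finset.prod_mul_distrib, Finset.prod_pow]

theorem prod_dixonRatio_eq_GammaSeq (hx₁ : -1 / 4 < x) (hx₂ : x < 1 / 4) {n : ℕ} (hn : n ≠ 0) :
    ∏ i ∈ Finset.range (n + 1), dixonRatio x i =
      Real.GammaSeq 1 n ^ 2 * Real.GammaSeq (1 + x) n * Real.GammaSeq (1 - 3 * x) n /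
        (Real.GammaSeq (1 + 2 * x) n * Real.GammaSeq (1 - 2 * x) n *
          Real.GammaSeq (1 - x) n ^ 2) := by
  have hn' : (0 : ℝ) < n := Nat.cast_pos.2 (Nat.pos_of_ne_zero hn)
  have hpow : (n : ℝ) ^ (1 + 2 * x) * (n : ℝ) ^ (1 - 2 * x) * ((n : ℝ) ^ (1 - x)) ^ 2 =
      ((n : ℝ) ^ (1 : ℝ)) ^ 2 * (n : ℝ) ^ (1 + x) * (n : ℝ) ^ (1 - 3 * x) := by
    simp only [← Real.rpow_natCast, ← Real.rpow_mul hn'.le, ← Real.rpow_add hn']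
    congr 1
    push_cast
    ring
  have hpoch : ∀ {s : ℝ}, 0 < s → pochR s (n + 1) ≠ 0 := fun hs => (pochR_pos hs _).ne'
  have hrpow : ∀ s : ℝ, (n : ℝ) ^ s ≠ 0 := fun s => (Real.rpow_pos_of_pos hn' s).ne'
  have h₁ := hpoch (s := 1 + 2 * x) (by linarith)
  have h₂ := hpoch (s := 1 - 2 * x) (by linarith)
  have h₃ := hpoch (s := 1 - x) (by linarith)
  simp only [prod_dixonRatio, GammaSeq_eq_div_pochR]
  field_simp
  rw [mul_comm 3 x] at hpow
  rw [hpow]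

theorem hasSum_pochR_two_mul_div_pow_three (hx : x ≠ 0) (hx₁ : -1 / 4 < x) (hx₂ : x < 1 / 4) :
    HasSum (fun k => (pochR (2 * x) k / pochR 1 k) ^ 3)
      (Real.Gamma (1 + x) * Real.Gamma (1 - 3 * x) /
        (Real.Gamma (1 + 2 * x) * Real.Gamma (1 - 2 * x) * Real.Gamma (1 - x) ^ 2)) := by
  have hsum := (summable_veryWellPoised hx hx₁ hx₂ 0).hasSum
  have hGamma : ∀ {s : ℝ}, 0 < s → Real.Gamma s ≠ 0 := fun hs => (Real.Gamma_pos_of_pos hs).ne'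
  have hlim := (((((Real.GammaSeq_tendsto_Gamma 1).pow 2).mul
    (Real.GammaSeq_tendsto_Gamma (1 + x))).mul (Real.GammaSeq_tendsto_Gamma (1 - 3 * x))).div
    (((Real.GammaSeq_tendsto_Gamma (1 + 2 * x)).mul (Real.GammaSeq_tendsto_Gamma (1 - 2 * x))).mul
      ((Real.GammaSeq_tendsto_Gamma (1 - x)).pow 2))
    (mul_ne_zero (mul_ne_zero (hGamma (by linarith)) (hGamma (by linarith)))
      (pow_ne_zero 2 (hGamma (by linarith))))).mul
    ((tendsto_tsum_veryWellPoised hx hx₁ hx₂).comp (tendsto_add_atTop_nat 1))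
  rw [Real.Gamma_one, one_pow, one_mul, mul_one] at hlim
  rw [← funext (veryWellPoised_zero_left hx hx₁)]
  convert hsum using 1
  refine tendsto_nhds_unique hlim (tendsto_const_nhds.congr' ?_)
  filter_upwards [eventually_ne_atTop 0] with n hn
  rw [tsum_veryWellPoised_zero_left hx hx₁ hx₂ (n + 1), prod_dixonRatio_eq_GammaSeq hx₁ hx₂ hn]
  rfl

end Dixon

section Growth

open Asymptotics Polynomial Function.Periodic

theorem exists_polynomial_eq_of_isLittleO_pow {n : ℕ} {f : ℂ → ℂ} (hf : Differentiable ℂ f)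
    (hfo : f =o[cocompact ℂ] fun z => z ^ n) :
    ∃ P : ℂ[X], P.degree < n ∧ ∀ z, f z = P.eval z := by
  induction n generalizing f with
  | zero =>
    have hlim : Tendsto f (cocompact ℂ) (𝓝 0) := by
      simpa only [pow_zero] using (isLittleO_one_iff ℂ).1 (by simpa only [pow_zero] using hfo)
    exact ⟨0, by simp, fun z => by rw [hf.apply_eq_of_tendsto_cocompact z hlim, eval_zero]⟩
  | succ n ih =>
    have hg : Differentiable ℂ (dslope f 0) := by
      rw [← differentiableOn_univ, Complex.differentiableOn_dslope univ_mem]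
      exact hf.differentiableOn
    have hfz (z : ℂ) : f z = z * dslope f 0 z + f 0 := by
      have := sub_smul_dslope f 0 z
      rw [sub_zero, smul_eq_mul] at this
      rw [this, sub_add_cancel]
    have hconst : (fun _ => f 0 : ℂ → ℂ) =o[cocompact ℂ] fun z => z ^ (n + 1) :=
      isLittleO_const_left.2 <| Or.inr <| by
        simpa only [Function.comp_def, norm_pow] using
          (tendsto_pow_atTop n.succ_ne_zero).comp (tendsto_norm_cocompact_atTop (E := ℂ))
    have hgo : dslope f 0 =o[cocompact ℂ] fun z => z ^ n := by
      have hne : ∀ᶠ z : ℂ in cocompact ℂ, z ≠ 0 := isCompact_singleton.compl_mem_cocompact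
      refine ((isBigO_refl (fun z : ℂ => z⁻¹) _).mul_isLittleO (hfo.sub hconst)).congr' ?_ ?_
      · filter_upwards [hne] with z hz
        rw [hfz z, add_sub_cancel_right, inv_mul_cancel_left₀ hz]
      · filter_upwards [hne] with z hz
        rw [pow_succ', inv_mul_cancel_left₀ hz]
    obtain ⟨P, hP, hgP⟩ := ih hg hgo
    refine ⟨X * P + C (f 0), ?_, fun z => ?_⟩
    · refine (degree_add_le _ _).trans_lt (max_lt ?_ ?_)
      · rw [degree_mul, degree_X, add_comm, Nat.cast_succ]
        exact WithBot.add_lt_add_right (by simp) hP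
      · exact degree_C_le.trans_lt (by exact_mod_cast n.succ_pos)
    · rw [hfz z, hgP, eval_add, eval_mul, eval_X, eval_C]

theorem exists_differentiable_comp_qParam {f : ℂ → ℂ} (hf : Differentiable ℂ f)
    (hper : Function.Periodic f 1)
    (h₀ : ZeroAtFilter (comap Complex.im atTop) fun z => f z * qParam 1 z) :
    ∃ G : ℂ → ℂ, Differentiable ℂ G ∧ ∀ z, f z = G (qParam 1 z) := by
  set h : ℂ → ℂ := fun z => f z * qParam 1 z with hh
  have hhd : Differentiable ℂ h := by fun_prop
  have hhper : Function.Periodic h (1 : ℝ) := fun z => by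
    simp [hh, hper z, qParam, mul_add, Complex.exp_add]
  set G := cuspFunction 1 h with hG
  have hGd : Differentiable ℂ G := fun q => by
    rcases eq_or_ne q 0 with rfl | hq
    · exact differentiableAt_cuspFunction_zero one_pos hhper (.of_forall hhd) h₀.boundedAtFilter
    · rw [← qParam_right_inv one_ne_zero hq]
      exact differentiableAt_cuspFunction one_ne_zero hhper (hhd _)
  refine ⟨dslope G 0, ?_, fun z => ?_⟩
  · rw [← differentiableOn_univ, Complex.differentiableOn_dslope univ_mem]
    exact hGd.differentiableOn
  · have hG0 : G 0 = 0 := cuspFunction_zero_of_zero_at_inf one_pos h₀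
    have hslope := sub_smul_dslope G 0 (qParam 1 z)
    rw [sub_zero, hG0, sub_zero, smul_eq_mul, hG, eq_cuspFunction one_ne_zero hhper,
      mul_comm] at hslope
    exact (mul_right_cancel₀ (qParam_ne_zero z) hslope).symm

theorem norm_mul_qParam_pow_le {f : ℂ → ℂ} {C c : ℝ} {z : ℂ}
    (hb : ‖f z‖ ≤ C * Real.exp (c * |z.im|)) (n : ℕ) :
    ‖f z * qParam 1 z ^ n‖ ≤ C * Real.exp (c * |z.im| - 2 * Real.pi * n * z.im) := by
  rw [norm_mul, norm_pow, norm_qParam, ← Real.exp_nat_mul]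
  refine (mul_le_mul_of_nonneg_right hb (Real.exp_pos _).le).trans_eq ?_
  rw [mul_assoc, ← Real.exp_add]
  ring_nf

theorem tendsto_im_invQParam_cocompact :
    Tendsto (fun q => (invQParam 1 q).im) (cocompact ℂ) atBot := by
  simp only [im_invQParam]
  exact (Real.tendsto_log_atTop.comp (tendsto_norm_cocompact_atTop (E := ℂ))).const_mul_atTop_of_neg
    (div_neg_of_neg_of_pos neg_one_lt_zero Real.two_pi_pos)

theorem exists_polynomial_qParam_of_growth {f : ℂ → ℂ} (hf : Differentiable ℂ f)
    (hper : Function.Periodic f 1) {N : ℕ} {C c : ℝ} (hc : c < 2 * Real.pi * (N + 1))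
    (hb : ∀ z, ‖f z‖ ≤ C * Real.exp (c * |z.im|)) :
    ∃ P : ℂ[X], P.degree < (2 * N + 1 : ℕ) ∧
      ∀ z, f z * qParam 1 z ^ N = P.eval (qParam 1 z) := by
  have hdecay : Tendsto (fun y : ℝ => C * Real.exp ((c - 2 * Real.pi * (N + 1)) * y)) atTop
      (𝓝 0) := by
    simpa using (Real.tendsto_exp_atBot.comp
      (tendsto_id.const_mul_atTop_of_neg (sub_neg.2 hc))).const_mul C
  obtain ⟨G, hGd, hG⟩ := exists_differentiable_comp_qParam
    (f := fun z => f z * qParam 1 z ^ N) (by fun_prop)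
    (fun z => by simp [hper z, qParam, mul_add, Complex.exp_add]) <| by
      refine squeeze_zero_norm' ?_ (hdecay.comp tendsto_comap)
      filter_upwards [tendsto_comap.eventually (eventually_ge_atTop (0 : ℝ))] with z hz
      rw [mul_assoc, ← pow_succ]
      refine (norm_mul_qParam_pow_le (hb z) _).trans_eq ?_
      rw [abs_of_nonneg hz, Function.comp_apply]
      push_cast
      ring_nf
  have hGo : G =o[cocompact ℂ] fun q => q ^ (2 * N + 1) := by
    have hne : ∀ᶠ q : ℂ in cocompact ℂ, q ≠ 0 := isCompact_singleton.compl_mem_cocompact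
    refine (isLittleO_iff_tendsto' (hne.mono fun q hq h => absurd h (pow_ne_zero _ hq))).2 ?_
    refine squeeze_zero_norm' ?_
      (hdecay.comp (tendsto_neg_atBot_atTop.comp tendsto_im_invQParam_cocompact))
    filter_upwards [hne, tendsto_im_invQParam_cocompact.eventually (eventually_le_atBot 0)]
      with q hq hz
    set z := invQParam 1 q with hzq
    have hqz : qParam 1 z = q := qParam_right_inv one_ne_zero hq
    rw [norm_div, norm_pow, ← hqz, ← hG, norm_qParam, ← Real.exp_nat_mul]
    refine (div_le_div_of_nonneg_right (norm_mul_qParam_pow_le (hb z) N)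
      (Real.exp_pos _).le).trans_eq ?_
    rw [mul_div_assoc, ← Real.exp_sub, abs_of_nonpos hz]
    simp only [Function.comp_apply, hqz, ← hzq]
    push_cast
    ring_nf
  obtain ⟨P, hP, hGP⟩ := exists_polynomial_eq_of_isLittleO_pow hGd hGo
  exact ⟨P, hP, fun z => by rw [hG, hGP]⟩

theorem apply_add_intCast_of_periodicOn_strip {E : Type*} {a b : ℝ} {f : ℂ → E}
    (hper : ∀ z : ℂ, a < z.re → z.re + 1 < b → f (z + 1) = f z) {z : ℂ} {n : ℤ}
    (hz : a < z.re) (hz' : z.re < b) (hn : a < z.re + n) (hn' : z.re + n < b) :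
    f (z + n) = f z := by
  have hnat (k : ℕ) {w : ℂ} (hw : a < w.re) : w.re + k < b → f (w + k) = f w := by
    induction k with
    | zero => intro _; rw [Nat.cast_zero, add_zero]
    | succ k ih =>
      intro hk
      push_cast at hk ⊢
      have : (0 : ℝ) ≤ k := k.cast_nonneg
      rw [← add_assoc, hper _ (by simpa using by linarith) (by simpa using by linarith),
        ih (by linarith)]
  obtain ⟨k, rfl | rfl⟩ := n.eq_nat_or_neg
  · exact_mod_cast hnat k hz (by exact_mod_cast hn')
  · have hback := hnat k (w := z + (-k : ℤ)) (by simpa using hn) (by simpa using hz')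
    rw [← hback]
    congr 1
    push_cast
    ring

theorem exists_intCast_sub_mem_strip {a b : ℝ} (hab : a + 1 < b) (z : ℂ) :
    ∃ n : ℤ, a < z.re - n ∧ z.re - n < b := by
  have := Int.floor_le (z.re - (a + b - 1) / 2)
  have := Int.lt_floor_add_one (z.re - (a + b - 1) / 2)
  exact ⟨⌊z.re - (a + b - 1) / 2⌋, by linarith, by linarith⟩

theorem isOpen_strip (a b : ℝ) : IsOpen {z : ℂ | a < z.re ∧ z.re < b} :=
  (isOpen_lt continuous_const Complex.continuous_re).inter
    (isOpen_lt Complex.continuous_re continuous_const)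

theorem exists_entire_periodic_extension {a b : ℝ} (hab : a + 1 < b) {f : ℂ → ℂ}
    (hf : DifferentiableOn ℂ f {z | a < z.re ∧ z.re < b})
    (hper : ∀ z : ℂ, a < z.re → z.re + 1 < b → f (z + 1) = f z) :
    ∃ F : ℂ → ℂ, Differentiable ℂ F ∧ Function.Periodic F 1 ∧
      ∀ z : ℂ, a < z.re → z.re < b → F z = f z := by
  choose n hn hn' using exists_intCast_sub_mem_strip hab
  have heq (z : ℂ) (m : ℤ) (hm : a < z.re - m) (hm' : z.re - m < b) :
      f (z - n z) = f (z - m) := by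
    have := apply_add_intCast_of_periodicOn_strip hper (z := z - m) (n := m - n z)
      (by simpa using hm) (by simpa using hm') (by simpa using hn z) (by simpa using hn' z)
    rw [← this]
    congr 1
    push_cast
    ring
  refine ⟨fun z => f (z - n z), fun z₀ => ?_, fun z => ?_, fun z hz hz' => ?_⟩
  · have hmem : {z : ℂ | a < z.re ∧ z.re < b} ∈ 𝓝 (z₀ - n z₀) :=
      (isOpen_strip a b).mem_nhds (by simpa using ⟨hn z₀, hn' z₀⟩)
    have hcont : ContinuousAt (fun z : ℂ => z - n z₀) z₀ := by fun_prop
    refine DifferentiableAt.congr_of_eventuallyEq (f := fun z => f (z - n z₀))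
      ((hf.differentiableAt hmem).comp z₀ (by fun_prop)) ?_
    filter_upwards [hcont.preimage_mem_nhds hmem] with z hz
    exact heq z _ (by simpa using hz.1) (by simpa using hz.2)
  · have := heq (z + 1) (n z + 1) (by simpa using hn z) (by simpa using hn' z)
    simp only [this]
    congr 1
    push_cast
    ring
  · simpa using heq z 0 (by simpa using hz) (by simpa using hz')

theorem eq_trigPolynomial_of_growth_strip {a b : ℝ} (hab : a + 1 < b) {f : ℂ → ℂ}
    (hf : DifferentiableOn ℂ f {z | a < z.re ∧ z.re < b})
    (hper : ∀ z : ℂ, a < z.re → z.re + 1 < b → f (z + 1) = f z) {C c : ℝ}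
    (hc : c < 4 * Real.pi)
    (hb : ∀ z : ℂ, a < z.re → z.re < b → ‖f z‖ ≤ C * Real.exp (c * |z.im|)) :
    ∃ c₀ c₁ c₂ : ℂ, ∀ z : ℂ, a < z.re → z.re < b →
      f z = c₀ + c₁ * Complex.exp (2 * Real.pi * Complex.I * z) +
        c₂ * Complex.exp (-(2 * Real.pi * Complex.I * z)) := by
  obtain ⟨F, hFd, hFper, hFf⟩ := exists_entire_periodic_extension hab hf hper
  have hFb (z : ℂ) : ‖F z‖ ≤ C * Real.exp (c * |z.im|) := by
    obtain ⟨n, hn, hn'⟩ := exists_intCast_sub_mem_strip hab z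
    have hshift : F (z - n) = F z := by simpa using hFper.sub_int_mul_eq (x := z) n
    rw [← hshift, hFf _ (by simpa using hn) (by simpa using hn')]
    simpa using hb (z - n) (by simpa using hn) (by simpa using hn')
  obtain ⟨P, hP, hFP⟩ := exists_polynomial_qParam_of_growth hFd hFper (N := 1)
    (by push_cast; linarith) hFb
  refine ⟨P.coeff 1, P.coeff 2, P.coeff 0, fun z hz hz' => ?_⟩
  have hq : qParam 1 z = Complex.exp (2 * Real.pi * Complex.I * z) := by simp [qParam]
  have hmul := hFP z
  have hdeg : P.natDegree < 3 := Nat.lt_succ_of_le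
    (natDegree_le_of_degree_le (Order.le_of_lt_succ (by exact_mod_cast hP)))
  rw [pow_one, hFf z hz hz', eval_eq_sum_range' hdeg, hq] at hmul
  simp only [Finset.sum_range_succ, Finset.sum_range_zero, zero_add, pow_zero, pow_one] at hmul
  rw [Complex.exp_neg, eq_comm, ← sub_eq_zero]
  have hne := Complex.exp_ne_zero (2 * Real.pi * Complex.I * z)
  field_simp
  linear_combination -hmul

end Growth

/-! ### Quotients of Gamma functions on vertical lines -/

section GammaQuotient

theorem norm_GammaSeq {w : ℂ} {n : ℕ} (hn : n ≠ 0) : ‖Complex.GammaSeq w n‖ =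
    (n : ℝ) ^ w.re * n.factorial / ∏ j ∈ Finset.range (n + 1), ‖w + j‖ := by
  rw [Complex.GammaSeq, norm_div, norm_mul, norm_prod, Complex.norm_natCast]
  congr 2
  rw [← Complex.ofReal_natCast, Complex.norm_cpow_eq_rpow_re_of_pos (by positivity)]

theorem le_norm_add_natCast {w : ℂ} {u : ℝ} (huw : u ≤ w.re) (j : ℕ) : u + j ≤ ‖w + j‖ := by
  refine le_trans ?_ (Complex.re_le_norm _)
  simpa only [Complex.add_re, Complex.natCast_re, add_le_add_iff_right] using huw

theorem mul_norm_add_le_norm_mul_add {w : ℂ} {u c : ℝ} (huw : u ≤ ‖w‖) (hu : 0 ≤ u)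
    (hc : 0 ≤ c) : u * ‖w + c‖ ≤ ‖w‖ * (u + c) := by
  have h : ‖w + c‖ ≤ ‖w‖ + c := by
    simpa only [Complex.norm_real, Real.norm_of_nonneg hc] using norm_add_le w (c : ℂ)
  calc u * ‖w + c‖ ≤ u * (‖w‖ + c) := by gcongr
    _ = ‖w‖ * u + u * c := by ring
    _ ≤ ‖w‖ * u + ‖w‖ * c := by gcongr
    _ = ‖w‖ * (u + c) := by ring

theorem prod_mul_prod_norm_le {w : ℂ} {u c : ℝ} (hu : 0 ≤ u) (huw : u ≤ w.re) (hc : 0 ≤ c)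
    (n : ℕ) : (∏ j ∈ Finset.range n, (u + j)) * ∏ j ∈ Finset.range n, ‖w + c + j‖ ≤
      (∏ j ∈ Finset.range n, ‖w + j‖) * ∏ j ∈ Finset.range n, (u + c + j) := by
  rw [← Finset.prod_mul_distrib, ← Finset.prod_mul_distrib]
  refine Finset.prod_le_prod (fun j _ => by positivity) fun j _ => ?_
  rw [add_right_comm w, add_right_comm u]
  exact mul_norm_add_le_norm_mul_add (le_norm_add_natCast huw j) (by positivity) hc

theorem norm_GammaSeq_mul_GammaSeq_le {w : ℂ} {u c : ℝ} (hu : 0 < u) (huw : u ≤ w.re)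
    (hc : 0 ≤ c) {n : ℕ} (hn : n ≠ 0) :
    ‖Complex.GammaSeq w n‖ * Real.GammaSeq (u + c) n ≤
      Real.GammaSeq u n * ‖Complex.GammaSeq (w + c) n‖ := by
  have hn₀ : (0 : ℝ) < n := by positivity
  have hre : u + c ≤ (w + c).re := by
    simpa only [Complex.add_re, Complex.ofReal_re, add_le_add_iff_right] using huw
  have hpos : ∀ j : ℕ, 0 < ‖w + c + j‖ := fun j =>
    lt_of_lt_of_le (by positivity) (le_norm_add_natCast hre j)
  have hpow : (n : ℝ) ^ w.re * (n : ℝ) ^ (u + c) = (n : ℝ) ^ u * (n : ℝ) ^ (w + c).re := by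
    rw [← Real.rpow_add hn₀, ← Real.rpow_add hn₀, Complex.add_re, Complex.ofReal_re]
    ring_nf
  rw [norm_GammaSeq hn, norm_GammaSeq hn, Real.GammaSeq, Real.GammaSeq, div_mul_div_comm,
    div_mul_div_comm]
  refine div_le_div₀ (by positivity) (le_of_eq ?_) ?_
    (prod_mul_prod_norm_le hu.le huw hc (n + 1))
  · linear_combination (n.factorial : ℝ) ^ 2 * hpow
  · exact mul_pos (Finset.prod_pos fun j _ => by positivity) (Finset.prod_pos fun j _ => hpos j)

theorem norm_Gamma_div_Gamma_le {w : ℂ} {u c : ℝ} (hu : 0 < u) (huw : u ≤ w.re) (hc : 0 ≤ c) :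
    ‖Complex.Gamma w / Complex.Gamma (w + c)‖ ≤ Real.Gamma u / Real.Gamma (u + c) := by
  have hwc : 0 < (w + c).re := by
    rw [Complex.add_re, Complex.ofReal_re]
    linarith
  have hG : 0 < ‖Complex.Gamma (w + c)‖ := norm_pos_iff.2 (Complex.Gamma_ne_zero_of_re_pos hwc)
  rw [norm_div, div_le_div_iff₀ hG (Real.Gamma_pos_of_pos (by linarith))]
  refine le_of_tendsto_of_tendsto
    ((Complex.GammaSeq_tendsto_Gamma w).norm.mul (Real.GammaSeq_tendsto_Gamma (u + c)))
    ((Real.GammaSeq_tendsto_Gamma u).mul (Complex.GammaSeq_tendsto_Gamma (w + c)).norm) ?_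
  filter_upwards [eventually_ne_atTop 0] with n hn
  exact norm_GammaSeq_mul_GammaSeq_le hu huw hc hn

theorem differentiableAt_Gamma_of_re_pos {w : ℂ} (hw : 0 < w.re) :
    DifferentiableAt ℂ Complex.Gamma w :=
  Complex.differentiableAt_Gamma w fun m h => by
    have : (0 : ℝ) ≤ m := m.cast_nonneg
    rw [h, Complex.neg_re, Complex.natCast_re] at hw
    linarith

theorem isOpen_re_gt (a : ℝ) : IsOpen {z : ℂ | a < z.re} :=
  isOpen_lt continuous_const Complex.continuous_re

end GammaQuotient

section GammaRatio

variable {x : ℝ} {z : ℂ}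

/-- The quotient `Γ(z + x) / Γ(z + 1 - x)`, whose cube is the hypergeometric building block of both
sides of the identity: it contributes `gammaRatioSum` and the prefactor of `wzSum`. -/
noncomputable def gammaRatio (x : ℝ) (z : ℂ) : ℂ :=
  Complex.Gamma (z + x) / Complex.Gamma (z + 1 - x)

/-- The value of `gammaRatio x` at the real point `1/4 + k`, which is the maximum of its norm over
the half plane `1/4 + k ≤ Re z`. -/
noncomputable def gammaRatioBound (x : ℝ) (k : ℕ) : ℝ :=
  Real.Gamma (1 / 4 + x + k) / Real.Gamma (5 / 4 - x + k)

theorem le_re_add_natCast {a : ℝ} (hz : a ≤ z.re) (k : ℕ) : a ≤ (z + k).re := by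
  rw [Complex.add_re, Complex.natCast_re]
  exact le_add_of_le_of_nonneg hz k.cast_nonneg

theorem add_ofReal_ne_zero_of_re_pos {c : ℝ} (h : 0 < z.re + c) : z + c ≠ 0 := fun h₀ => by
  have := congrArg Complex.re h₀
  rw [Complex.add_re, Complex.ofReal_re, Complex.zero_re] at this
  exact h.ne' this

theorem gammaRatioBound_pos (hx₁ : -1 / 4 < x) (hx₂ : x < 1 / 4) (k : ℕ) :
    0 < gammaRatioBound x k := by
  have : (0 : ℝ) ≤ k := k.cast_nonneg
  exact div_pos (Real.Gamma_pos_of_pos (by linarith)) (Real.Gamma_pos_of_pos (by linarith))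

theorem gammaRatioBound_succ (hx₁ : -1 / 4 < x) (hx₂ : x < 1 / 4) (k : ℕ) :
    gammaRatioBound x (k + 1) = gammaRatioBound x k * ((1 / 4 + x + k) / (5 / 4 - x + k)) := by
  have : (0 : ℝ) ≤ k := k.cast_nonneg
  rw [gammaRatioBound, gammaRatioBound, Nat.cast_add_one, ← add_assoc, ← add_assoc,
    Real.Gamma_add_one (by linarith), Real.Gamma_add_one (by linarith), div_mul_div_comm,
    mul_comm (Real.Gamma _), mul_comm (Real.Gamma _)]

theorem norm_gammaRatio_add_le (hx₁ : -1 / 4 < x) (hx₂ : x < 1 / 4) (hz : 1 / 4 ≤ z.re) (k : ℕ) :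
    ‖gammaRatio x (z + k)‖ ≤ gammaRatioBound x k := by
  have : (0 : ℝ) ≤ k := k.cast_nonneg
  have hre : 1 / 4 + x + k ≤ (z + k + x).re := by
    simp only [Complex.add_re, Complex.natCast_re, Complex.ofReal_re]
    linarith
  have h := norm_Gamma_div_Gamma_le (c := 1 - 2 * x) (by linarith) hre (by linarith)
  rw [gammaRatio, gammaRatioBound]
  convert h using 3
  · congr 1
    push_cast
    ring
  · ring

theorem sq_gammaRatioBound_mul_le (hx₁ : -1 / 4 < x) (hx₂ : x < 1 / 4) (k : ℕ) :
    gammaRatioBound x k ^ 2 * (2 * k + 1) ≤ gammaRatioBound x 0 ^ 2 := by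
  induction k with
  | zero => simp
  | succ k ih =>
    refine le_trans ?_ ih
    have : (0 : ℝ) ≤ k := k.cast_nonneg
    have : 0 < 5 / 4 - x + k := by linarith
    have hnum : (1 / 4 + x + k) ^ 2 ≤ (k + 1 / 2) ^ 2 :=
      pow_le_pow_left₀ (by linarith) (by linarith) 2
    have hden : ((k : ℝ) + 1) ^ 2 ≤ (5 / 4 - x + k) ^ 2 :=
      pow_le_pow_left₀ (by linarith) (by linarith) 2
    rw [gammaRatioBound_succ hx₁ hx₂, mul_pow, mul_assoc]
    refine mul_le_mul_of_nonneg_left ?_ (by positivity)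
    rw [div_pow, div_mul_eq_mul_div, div_le_iff₀ (by positivity), Nat.cast_add_one]
    calc (1 / 4 + x + k) ^ 2 * (2 * ((k : ℝ) + 1) + 1)
        ≤ (k + 1 / 2) ^ 2 * (2 * ((k : ℝ) + 1) + 1) := by gcongr
      _ ≤ (2 * k + 1) * ((k : ℝ) + 1) ^ 2 := by nlinarith
      _ ≤ (2 * k + 1) * (5 / 4 - x + k) ^ 2 := by gcongr

theorem gammaRatioBound_pow_three_le (hx₁ : -1 / 4 < x) (hx₂ : x < 1 / 4) (k : ℕ) :
    gammaRatioBound x k ^ 3 ≤ gammaRatioBound x 0 ^ 3 * ((k : ℝ) + 1) ^ (-(3 / 2) : ℝ) := by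
  have hsq : gammaRatioBound x k ^ 2 ≤ gammaRatioBound x 0 ^ 2 * ((k : ℝ) + 1)⁻¹ := by
    rw [← div_eq_mul_inv, le_div_iff₀ (by positivity)]
    refine le_trans ?_ (sq_gammaRatioBound_mul_le hx₁ hx₂ k)
    gcongr
    linarith [k.cast_nonneg (α := ℝ)]
  have hpow : ∀ j, (gammaRatioBound x j ^ 2) ^ (3 / 2 : ℝ) = gammaRatioBound x j ^ 3 := fun j => by
    rw [← Real.rpow_natCast _ 2, ← Real.rpow_mul (gammaRatioBound_pos hx₁ hx₂ j).le,
      ← Real.rpow_natCast]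
    norm_num
  calc gammaRatioBound x k ^ 3 = (gammaRatioBound x k ^ 2) ^ (3 / 2 : ℝ) := (hpow k).symm
    _ ≤ (gammaRatioBound x 0 ^ 2 * ((k : ℝ) + 1)⁻¹) ^ (3 / 2 : ℝ) := by gcongr
    _ = _ := by
      rw [Real.mul_rpow (by positivity) (by positivity), hpow, Real.inv_rpow (by positivity),
        Real.rpow_neg (by positivity)]

theorem summable_gammaRatioBound_pow_three (hx₁ : -1 / 4 < x) (hx₂ : x < 1 / 4) :
    Summable fun k => gammaRatioBound x k ^ 3 :=
  Summable.of_nonneg_of_le (fun k => (pow_pos (gammaRatioBound_pos hx₁ hx₂ k) 3).le)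
    (gammaRatioBound_pow_three_le hx₁ hx₂)
    ((summable_natCast_add_one_rpow (by norm_num)).mul_left _)

theorem tendsto_gammaRatioBound (hx₁ : -1 / 4 < x) (hx₂ : x < 1 / 4) :
    Tendsto (gammaRatioBound x) atTop (𝓝 0) := by
  have h := (summable_gammaRatioBound_pow_three hx₁ hx₂).tendsto_atTop_zero.rpow_const
    (p := (1 / 3 : ℝ)) (Or.inr (by norm_num))
  rw [Real.zero_rpow (by norm_num)] at h
  refine h.congr fun k => ?_
  rw [← Real.rpow_natCast, ← Real.rpow_mul (gammaRatioBound_pos hx₁ hx₂ k).le]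
  norm_num

theorem add_one_sub_ofReal_ne_zero (hx₂ : x < 1 / 4) (hz : 1 / 4 ≤ z.re) : z + 1 - x ≠ 0 := by
  have h : z + ((1 - x : ℝ) : ℂ) ≠ 0 := add_ofReal_ne_zero_of_re_pos (by linarith)
  rwa [Complex.ofReal_sub, Complex.ofReal_one, ← add_sub_assoc] at h

theorem gammaRatio_add_one (hx₁ : -1 / 4 < x) (hx₂ : x < 1 / 4) (hz : 1 / 4 ≤ z.re) :
    gammaRatio x (z + 1) * (z + 1 - x) = gammaRatio x z * (z + x) := by
  have h₁ : z + x ≠ 0 := add_ofReal_ne_zero_of_re_pos (by linarith)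
  have h₂ : z + 1 - x ≠ 0 := add_one_sub_ofReal_ne_zero hx₂ hz
  have h₃ : Complex.Gamma (z + 1 - x) ≠ 0 :=
    Complex.Gamma_ne_zero_of_re_pos (by
      simp only [Complex.sub_re, Complex.add_re, Complex.one_re, Complex.ofReal_re]
      linarith)
  rw [gammaRatio, gammaRatio, add_right_comm z 1, add_sub_right_comm (z + 1) 1,
    Complex.Gamma_add_one _ h₁, Complex.Gamma_add_one _ h₂]
  field_simp

theorem gammaRatio_eq_add_one_add (hx₁ : -1 / 4 < x) (hx₂ : x < 1 / 4) (hz : 1 / 4 ≤ z.re) :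
    gammaRatio x z =
      gammaRatio x (z + 1) + ((1 - 2 * x : ℝ) : ℂ) * gammaRatio x z / (z + 1 - x) := by
  have := add_one_sub_ofReal_ne_zero hx₂ hz
  push_cast
  field_simp
  linear_combination -gammaRatio_add_one hx₁ hx₂ hz

theorem gammaRatio_eq_add_sum (hx₁ : -1 / 4 < x) (hx₂ : x < 1 / 4) (hz : 1 / 4 ≤ z.re) (n : ℕ) :
    gammaRatio x z = gammaRatio x (z + n) +
      ∑ k ∈ Finset.range n, ((1 - 2 * x : ℝ) : ℂ) * gammaRatio x (z + k) / (z + k + 1 - x) := by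
  induction n with
  | zero => simp
  | succ n ih =>
    have h := gammaRatio_eq_add_one_add hx₁ hx₂ (le_re_add_natCast hz n)
    rw [Finset.sum_range_succ, Nat.cast_add_one, ← add_assoc z]
    linear_combination ih + h

theorem norm_gammaRatio_div_le (hx₁ : -1 / 4 < x) (hx₂ : x < 1 / 4) (hz : 1 / 4 ≤ z.re)
    (hz' : 0 < |z.im|) (k : ℕ) :
    ‖((1 - 2 * x : ℝ) : ℂ) * gammaRatio x (z + k) / (z + k + 1 - x)‖ ≤
      (1 - 2 * x) * gammaRatioBound x k * |z.im|⁻¹ := by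
  have : 0 ≤ 1 - 2 * x := by linarith
  have := gammaRatioBound_pos hx₁ hx₂ k
  have him : |z.im| ≤ ‖z + k + 1 - x‖ := by
    simpa using Complex.abs_im_le_norm (z + k + 1 - x)
  rw [norm_div, norm_mul, div_eq_mul_inv, Complex.norm_of_nonneg (by linarith)]
  gcongr
  exact norm_gammaRatio_add_le hx₁ hx₂ hz k

theorem tendsto_gammaRatio {ι : Type*} {l : Filter ι} {w : ι → ℂ} (hx₁ : -1 / 4 < x)
    (hx₂ : x < 1 / 4) (hw : ∀ i, 1 / 4 ≤ (w i).re)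
    (hlim : Tendsto (fun i => |(w i).im|) l atTop) :
    Tendsto (fun i => gammaRatio x (w i)) l (𝓝 0) := by
  have hterm : ∀ k : ℕ, Tendsto (fun i => ((1 - 2 * x : ℝ) : ℂ) * gammaRatio x (w i + k) /
      (w i + k + 1 - x)) l (𝓝 0) := fun k => by
    refine squeeze_zero_norm' (a := fun i => (1 - 2 * x) * gammaRatioBound x k * |(w i).im|⁻¹) ?_
      (by simpa using hlim.inv_tendsto_atTop.const_mul ((1 - 2 * x) * gammaRatioBound x k))
    filter_upwards [hlim.eventually_gt_atTop 0] with i hi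
    exact norm_gammaRatio_div_le hx₁ hx₂ (hw i) hi k
  have hsum : ∀ n, Tendsto (fun i => ∑ k ∈ Finset.range n,
      ((1 - 2 * x : ℝ) : ℂ) * gammaRatio x (w i + k) / (w i + k + 1 - x)) l (𝓝 0) := fun n => by
    simpa only [Finset.sum_const_zero] using
      tendsto_finsetSum (Finset.range n) fun k _ => hterm k
  rw [Metric.tendsto_nhds]
  intro ε hε
  obtain ⟨n, hn⟩ := ((tendsto_gammaRatioBound hx₁ hx₂).eventually_lt_const (half_pos hε)).exists
  filter_upwards [Metric.tendsto_nhds.1 (hsum n) (ε / 2) (half_pos hε)] with i hi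
  rw [dist_zero_right] at hi ⊢
  calc ‖gammaRatio x (w i)‖ ≤ _ := by
        rw [gammaRatio_eq_add_sum hx₁ hx₂ (hw i) n]
        exact norm_add_le _ _
    _ < ε / 2 + ε / 2 := add_lt_add ((norm_gammaRatio_add_le hx₁ hx₂ (hw i) n).trans_lt hn) hi
    _ = ε := add_halves ε

theorem differentiableOn_gammaRatio (hx₁ : -1 / 4 < x) (hx₂ : x < 1 / 4) :
    DifferentiableOn ℂ (gammaRatio x) {z | 1 / 4 < z.re} := by
  intro z (hz : 1 / 4 < z.re)
  have h₁ : 0 < (z + x).re := by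
    rw [Complex.add_re, Complex.ofReal_re]
    linarith
  have h₂ : 0 < (z + 1 - x).re := by
    rw [Complex.sub_re, Complex.add_re, Complex.one_re, Complex.ofReal_re]
    linarith
  have hnum : DifferentiableAt ℂ (fun z : ℂ => Complex.Gamma (z + x)) z :=
    (differentiableAt_Gamma_of_re_pos h₁).comp z (by fun_prop)
  have hden : DifferentiableAt ℂ (fun z : ℂ => Complex.Gamma (z + 1 - x)) z :=
    (differentiableAt_Gamma_of_re_pos h₂).comp z (by fun_prop)
  exact (hnum.div hden (Complex.Gamma_ne_zero_of_re_pos h₂)).differentiableWithinAt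

/-- The sum of `gammaRatio x ^ 3` over `z + ℕ`, a solution of the difference equation
`S z - S (z + 1) = gammaRatio x z ^ 3`. -/
noncomputable def gammaRatioSum (x : ℝ) (z : ℂ) : ℂ := ∑' k : ℕ, gammaRatio x (z + k) ^ 3

theorem norm_gammaRatio_pow_three_le (hx₁ : -1 / 4 < x) (hx₂ : x < 1 / 4) (hz : 1 / 4 ≤ z.re)
    (k : ℕ) : ‖gammaRatio x (z + k) ^ 3‖ ≤ gammaRatioBound x k ^ 3 := by
  rw [norm_pow]
  exact pow_le_pow_left₀ (norm_nonneg _) (norm_gammaRatio_add_le hx₁ hx₂ hz k) 3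

theorem gammaRatioSum_eq_add (hx₁ : -1 / 4 < x) (hx₂ : x < 1 / 4) (hz : 1 / 4 ≤ z.re) :
    gammaRatioSum x z = gammaRatio x z ^ 3 + gammaRatioSum x (z + 1) := by
  have hsum : Summable fun k : ℕ => gammaRatio x (z + k) ^ 3 :=
    .of_norm_bounded (summable_gammaRatioBound_pow_three hx₁ hx₂)
      (norm_gammaRatio_pow_three_le hx₁ hx₂ hz)
  simp only [gammaRatioSum, hsum.tsum_eq_zero_add, Nat.cast_zero, add_zero, Nat.cast_add_one,
    add_assoc, add_comm (1 : ℂ)]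

theorem norm_gammaRatioSum_le (hx₁ : -1 / 4 < x) (hx₂ : x < 1 / 4) (hz : 1 / 4 ≤ z.re) :
    ‖gammaRatioSum x z‖ ≤ ∑' k, gammaRatioBound x k ^ 3 :=
  tsum_of_norm_bounded (summable_gammaRatioBound_pow_three hx₁ hx₂).hasSum
    (norm_gammaRatio_pow_three_le hx₁ hx₂ hz)

theorem tendsto_gammaRatioSum {ι : Type*} {l : Filter ι} {w : ι → ℂ} (hx₁ : -1 / 4 < x)
    (hx₂ : x < 1 / 4) (hw : ∀ i, 1 / 4 ≤ (w i).re)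
    (hlim : Tendsto (fun i => |(w i).im|) l atTop) :
    Tendsto (fun i => gammaRatioSum x (w i)) l (𝓝 0) := by
  rw [← tsum_zero (β := ℕ)]
  refine tendsto_tsum_of_dominated_convergence (summable_gammaRatioBound_pow_three hx₁ hx₂)
    (fun k => ?_)
    (Eventually.of_forall fun i k => norm_gammaRatio_pow_three_le hx₁ hx₂ (hw i) k)
  have h := tendsto_gammaRatio (w := fun i => w i + k) hx₁ hx₂
    (fun i => le_re_add_natCast (hw i) k) (by simpa using hlim)
  simpa using h.pow 3

theorem differentiableOn_gammaRatioSum (hx₁ : -1 / 4 < x) (hx₂ : x < 1 / 4) :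
    DifferentiableOn ℂ (gammaRatioSum x) {z | 1 / 4 < z.re} := by
  refine Complex.differentiableOn_tsum_of_summable_norm
    (summable_gammaRatioBound_pow_three hx₁ hx₂) (fun k => ?_) (isOpen_re_gt _)
    fun k z hz => norm_gammaRatio_pow_three_le hx₁ hx₂ (le_of_lt hz) k
  have hmaps : Set.MapsTo (fun z : ℂ => z + k) {z | 1 / 4 < z.re} {z | 1 / 4 < z.re} := by
    intro z (hz : 1 / 4 < z.re)
    rw [Set.mem_ofPred_eq, Complex.add_re, Complex.natCast_re]
    exact lt_add_of_lt_of_nonneg hz k.cast_nonneg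
  exact ((differentiableOn_gammaRatio hx₁ hx₂).comp (by fun_prop) hmaps).pow 3

end GammaRatio

/-! ### The Wilf–Zeilberger summand -/

section SinhProduct

theorem sinh_le_mul_exp (v : ℝ) : Real.sinh v ≤ v * Real.exp v := by
  have hle := Real.add_one_le_exp (-(2 * v))
  have hsplit : Real.exp (-v) = Real.exp v * Real.exp (-(2 * v)) := by
    rw [← Real.exp_add]
    ring_nf
  rw [Real.sinh_eq, hsplit]
  nlinarith [Real.exp_pos v]

theorem tendsto_euler_sinh_prod (v : ℝ) :
    Tendsto (fun n : ℕ =>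
      Real.pi * v * ∏ m ∈ Finset.range n, (1 + v ^ 2 / ((m : ℝ) + 1) ^ 2)) atTop
      (𝓝 (Real.sinh (Real.pi * v))) := by
  have h := (Complex.tendsto_euler_sin_prod (v * Complex.I)).mul_const (-Complex.I)
  have hsinh : Complex.sin (Real.pi * (v * Complex.I)) * -Complex.I =
      (Real.sinh (Real.pi * v) : ℂ) := by
    rw [← mul_assoc, Complex.sin_mul_I, mul_assoc, mul_neg, Complex.I_mul_I, neg_neg, mul_one]
    push_cast
    rfl
  have hfactor : ∀ m : ℕ, (1 : ℂ) - (v * Complex.I) ^ 2 / (m + 1) ^ 2 =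
      1 + v ^ 2 / (m + 1) ^ 2 := fun m => by
    rw [mul_pow, Complex.I_sq]
    ring
  rw [hsinh] at h
  rw [← tendsto_ofReal_iff]
  refine h.congr fun n => ?_
  push_cast
  simp only [hfactor]
  linear_combination (-(Real.pi : ℂ) * v *
    ∏ m ∈ Finset.range n, ((1 : ℂ) + v ^ 2 / (m + 1) ^ 2)) * Complex.I_mul_I

theorem prod_one_add_sq_div_sq_le {v : ℝ} (hv : 0 ≤ v) (n : ℕ) :
    ∏ m ∈ Finset.range n, (1 + v ^ 2 / ((m : ℝ) + 1) ^ 2) ≤ Real.exp (Real.pi * v) := by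
  rcases hv.eq_or_lt with rfl | hv
  · simp
  have hπv : 0 < Real.pi * v := mul_pos Real.pi_pos hv
  have hmono : Monotone fun n : ℕ =>
      Real.pi * v * ∏ m ∈ Finset.range n, (1 + v ^ 2 / ((m : ℝ) + 1) ^ 2) := by
    refine monotone_nat_of_le_succ fun n => mul_le_mul_of_nonneg_left ?_ hπv.le
    rw [Finset.prod_range_succ]
    exact le_mul_of_one_le_right (Finset.prod_nonneg fun m _ => by positivity)
      (le_add_of_nonneg_right (by positivity))
  have hle := hmono.ge_of_tendsto (tendsto_euler_sinh_prod v) n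
  exact le_of_mul_le_mul_left (hle.trans (sinh_le_mul_exp _)) hπv

end SinhProduct

section PochG

theorem pochG_pos {a t : ℝ} (ha : 0 < a) (hat : 0 < a + t) : 0 < pochG a t :=
  div_pos (Real.Gamma_pos_of_pos hat) (Real.Gamma_pos_of_pos ha)

theorem pochG_add_one {a t : ℝ} (h : a + t ≠ 0) : pochG a (t + 1) = (a + t) * pochG a t := by
  rw [pochG, pochG, ← add_assoc, Real.Gamma_add_one h, mul_div_assoc]

end PochG

section Coefficients

variable {x : ℝ}

/-- The coefficient `(3/4)^{3t} (1/2)_t³ (1/3)_t (2/3)_t / (1)_t⁵` of the theorem at `t = n + x`. -/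
noncomputable def wzCoeff (x : ℝ) (n : ℕ) : ℝ :=
  (3 / 4 : ℝ) ^ ((3 : ℝ) * ((n : ℝ) + x)) *
    (pochG (1 / 2) ((n : ℝ) + x) ^ 3 * pochG (1 / 3) ((n : ℝ) + x) *
      pochG (2 / 3) ((n : ℝ) + x) / pochG 1 ((n : ℝ) + x) ^ 5)

theorem wzCoeff_pos (hx₁ : -1 / 4 < x) (n : ℕ) : 0 < wzCoeff x n := by
  have : (0 : ℝ) ≤ n := n.cast_nonneg
  have h : ∀ a : ℝ, 1 / 3 ≤ a → 0 < pochG a (n + x) := fun a ha =>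
    pochG_pos (by linarith) (by linarith)
  have := h (1 / 2) (by norm_num)
  have := h (1 / 3) le_rfl
  have := h (2 / 3) (by norm_num)
  have := h 1 (by norm_num)
  rw [wzCoeff]
  positivity

theorem wzCoeff_succ (hx₁ : -1 / 4 < x) (n : ℕ) :
    wzCoeff x (n + 1) * (64 * (n + x + 1) ^ 5) =
      wzCoeff x n * (27 * (n + x + 1 / 2) ^ 3 * (n + x + 1 / 3) * (n + x + 2 / 3)) := by
  have : (0 : ℝ) ≤ n := n.cast_nonneg
  have : 0 < pochG 1 ((n : ℝ) + x) := pochG_pos one_pos (by linarith)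
  have : (0 : ℝ) < 1 + (n + x) := by linarith
  have hpow : (3 / 4 : ℝ) ^ ((3 : ℝ) * (n + x + 1)) =
      (3 / 4) ^ ((3 : ℝ) * (n + x)) * (3 / 4) ^ 3 := by
    rw [mul_add_one, ← Real.rpow_add_natCast (by norm_num)]
    norm_num
  rw [wzCoeff, wzCoeff, Nat.cast_add_one, add_right_comm (n : ℝ), pochG_add_one (by linarith),
    pochG_add_one (by linarith), pochG_add_one (by linarith), pochG_add_one (by linarith), hpow]
  field_simp
  ring

theorem wzCoeff_succ_le (hx₁ : -1 / 4 < x) (n : ℕ) :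
    wzCoeff x (n + 1) ≤ wzCoeff x n * (27 / 64) := by
  have : (0 : ℝ) ≤ n := n.cast_nonneg
  have : 0 < wzCoeff x n := wzCoeff_pos hx₁ n
  have : 0 < n + x + 1 / 3 := by linarith
  have : 0 < n + x + 1 / 2 := by linarith
  have : 0 < n + x + 1 := by linarith
  refine le_of_mul_le_mul_right ?_ (by positivity : 0 < 64 * (n + x + 1) ^ 5)
  calc wzCoeff x (n + 1) * (64 * (n + x + 1) ^ 5)
      = wzCoeff x n * (27 * ((n + x + 1 / 2) ^ 3 * (n + x + 1 / 3) * (n + x + 2 / 3))) := by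
        rw [wzCoeff_succ hx₁]
        ring
    _ ≤ wzCoeff x n * (27 * ((n + x + 1) ^ 3 * (n + x + 1) * (n + x + 1))) := by
        gcongr <;> linarith
    _ = wzCoeff x n * (27 / 64) * (64 * (n + x + 1) ^ 5) := by ring

theorem wzCoeff_le (hx₁ : -1 / 4 < x) (n : ℕ) : wzCoeff x n ≤ wzCoeff x 0 * (27 / 64) ^ n := by
  induction n with
  | zero => simp
  | succ n ih =>
    rw [pow_succ, ← mul_assoc]
    exact (wzCoeff_succ_le hx₁ n).trans (mul_le_mul_of_nonneg_right ih (by norm_num))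

theorem summable_add_const_pow_mul_geometric (c : ℝ) (k : ℕ) {r : ℝ} (hr : ‖r‖ < 1) :
    Summable fun n : ℕ => ((n : ℝ) + c) ^ k * r ^ n := by
  simp only [add_pow, Finset.sum_mul]
  refine summable_sum fun j _ => ?_
  refine ((summable_pow_mul_geometric_of_norm_lt_one j hr).mul_left
    (c ^ (k - j) * k.choose j)).congr fun n => ?_
  ring

end Coefficients

section PochQuot

variable {x : ℝ} {u v w : ℂ}

/-- The quotient of rising factorials `(u + x)_n (v + x)_n / (1/2 + x)_n²`. The summand `wzTerm` of
the Wilf–Zeilberger pair uses it at `(u, v) = (z, 1 - z)` and its companion at `(z, -z)`. -/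
noncomputable def pochQuot (x : ℝ) (n : ℕ) (u v : ℂ) : ℂ :=
  ∏ m ∈ Finset.range n, ((u + x + m) * (v + x + m) / (1 / 2 + x + m) ^ 2)

theorem pochQuot_zero (x : ℝ) (u v : ℂ) : pochQuot x 0 u v = 1 :=
  Finset.prod_range_zero _

theorem pochQuot_succ (x : ℝ) (n : ℕ) (u v : ℂ) : pochQuot x (n + 1) u v =
    pochQuot x n u v * ((u + x + n) * (v + x + n) / (1 / 2 + x + n) ^ 2) :=
  Finset.prod_range_succ _ _

theorem pochQuot_comm (x : ℝ) (n : ℕ) (u v : ℂ) : pochQuot x n u v = pochQuot x n v u := by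
  simp only [pochQuot, mul_comm (u + x + _)]

theorem pochQuot_mul_add (x : ℝ) (n : ℕ) (u v : ℂ) :
    pochQuot x n u (v + 1) * (v + x) = pochQuot x n u v * (v + x + n) := by
  induction n with
  | zero => simp [pochQuot_zero]
  | succ n ih =>
    rw [pochQuot_succ, pochQuot_succ, mul_right_comm, ih]
    push_cast
    ring

theorem prod_add_nine_fourths_div (n : ℕ) :
    ∏ m ∈ Finset.range n, (((m : ℝ) + 9 / 4) / (m + 1 / 4)) =
      16 / 5 * (n + 1 / 4) * (n + 5 / 4) := by
  induction n with
  | zero => norm_num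
  | succ n ih =>
    rw [Finset.prod_range_succ, ih]
    push_cast
    field_simp
    ring

theorem norm_add_add_natCast_le (hx : |x| ≤ 1 / 4) {y : ℝ} (hre : |w.re| ≤ 2) (him : |w.im| ≤ y)
    (m : ℕ) : ‖w + x + m‖ ≤ (m + 9 / 4) * √(1 + y ^ 2 / ((m : ℝ) + 1) ^ 2) := by
  have hm : (0 : ℝ) ≤ m := m.cast_nonneg
  have hre' : |w.re + x + m| ≤ m + 9 / 4 := by
    have := abs_add_three w.re x m
    rw [abs_of_nonneg hm] at this
    linarith
  have him' : y ≤ (m + 9 / 4) * (y / (m + 1)) := by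
    have : 0 ≤ y := (abs_nonneg _).trans him
    rw [mul_div_left_comm]
    exact le_mul_of_one_le_right this ((one_le_div (by positivity)).2 (by linarith))
  refine (sq_le_sq₀ (norm_nonneg _) (by positivity)).1 ?_
  rw [mul_pow, Real.sq_sqrt (by positivity), ← Complex.normSq_eq_norm_sq, Complex.normSq_apply]
  simp only [Complex.add_re, Complex.add_im, Complex.natCast_re, Complex.natCast_im,
    Complex.ofReal_re, Complex.ofReal_im, add_zero]
  calc (w.re + x + m) * (w.re + x + m) + w.im * w.im
      = |w.re + x + m| ^ 2 + |w.im| ^ 2 := by rw [sq_abs, sq_abs, sq, sq]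
    _ ≤ (m + 9 / 4) ^ 2 + ((m + 9 / 4) * (y / (m + 1))) ^ 2 := by
        gcongr
        exact him.trans him'
    _ = (m + 9 / 4) ^ 2 * (1 + y ^ 2 / (m + 1) ^ 2) := by
        rw [mul_pow, div_pow]
        ring

theorem norm_pochQuot_factor_le (hx : |x| ≤ 1 / 4) {y : ℝ} (hu : |u.re| ≤ 2) (hv : |v.re| ≤ 2)
    (hu' : |u.im| ≤ y) (hv' : |v.im| ≤ y) (m : ℕ) :
    ‖(u + x + m) * (v + x + m) / (1 / 2 + x + m) ^ 2‖ ≤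
      (((m : ℝ) + 9 / 4) / (m + 1 / 4)) ^ 2 * (1 + y ^ 2 / ((m : ℝ) + 1) ^ 2) := by
  have hden : (m : ℝ) + 1 / 4 ≤ ‖(1 / 2 + x + m : ℂ)‖ := by
    refine le_trans ?_ (Complex.re_le_norm _)
    simp only [Complex.add_re, Complex.natCast_re, Complex.ofReal_re]
    norm_num
    linarith [neg_le_of_abs_le hx]
  rw [norm_div, norm_mul, norm_pow]
  calc ‖u + x + m‖ * ‖v + x + m‖ / ‖(1 / 2 + x + m : ℂ)‖ ^ 2
      ≤ ((m + 9 / 4) * √(1 + y ^ 2 / ((m : ℝ) + 1) ^ 2)) *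
          ((m + 9 / 4) * √(1 + y ^ 2 / ((m : ℝ) + 1) ^ 2)) / ((m : ℝ) + 1 / 4) ^ 2 := by
        gcongr
        · exact norm_add_add_natCast_le hx hu hu' m
        · exact norm_add_add_natCast_le hx hv hv' m
    _ = _ := by
        rw [mul_mul_mul_comm, Real.mul_self_sqrt (by positivity), div_pow]
        ring

theorem norm_pochQuot_le (hx : |x| ≤ 1 / 4) {y : ℝ} (hu : |u.re| ≤ 2) (hv : |v.re| ≤ 2)
    (hu' : |u.im| ≤ y) (hv' : |v.im| ≤ y) (n : ℕ) :
    ‖pochQuot x n u v‖ ≤ 16 * (n + 2) ^ 4 * Real.exp (Real.pi * y) := by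
  have hlin : (16 / 5 * ((n : ℝ) + 1 / 4) * (n + 5 / 4)) ^ 2 ≤ (4 * (n + 2) ^ 2) ^ 2 := by
    refine pow_le_pow_left₀ (by positivity) ?_ 2
    nlinarith [n.cast_nonneg (α := ℝ)]
  calc ‖pochQuot x n u v‖ ≤ ∏ m ∈ Finset.range n,
        ((((m : ℝ) + 9 / 4) / (m + 1 / 4)) ^ 2 * (1 + y ^ 2 / ((m : ℝ) + 1) ^ 2)) := by
        rw [pochQuot, norm_prod]
        exact Finset.prod_le_prod (fun m _ => norm_nonneg _) fun m _ =>
          norm_pochQuot_factor_le hx hu hv hu' hv' m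
    _ = (16 / 5 * ((n : ℝ) + 1 / 4) * (n + 5 / 4)) ^ 2 *
          ∏ m ∈ Finset.range n, (1 + y ^ 2 / ((m : ℝ) + 1) ^ 2) := by
        rw [Finset.prod_mul_distrib, Finset.prod_pow, prod_add_nine_fourths_div]
    _ ≤ (4 * (n + 2) ^ 2) ^ 2 * Real.exp (Real.pi * y) := by
        gcongr
        exact prod_one_add_sq_div_sq_le ((abs_nonneg _).trans hu') n
    _ = _ := by ring

theorem wzCoeff_mul_norm_pochQuot_le (hx₁ : -1 / 4 < x) (hx₂ : x < 1 / 4) {y : ℝ}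
    (hu : |u.re| ≤ 2) (hv : |v.re| ≤ 2) (hu' : |u.im| ≤ y) (hv' : |v.im| ≤ y) (n : ℕ) :
    wzCoeff x n * ‖pochQuot x n u v‖ ^ 3 ≤
      wzCoeff x 0 * 4096 * ((n + 2) ^ 12 * (27 / 64) ^ n) * Real.exp (3 * Real.pi * y) := by
  have hx : |x| ≤ 1 / 4 := abs_le.2 ⟨by linarith, hx₂.le⟩
  have := (wzCoeff_pos hx₁ 0).le
  calc wzCoeff x n * ‖pochQuot x n u v‖ ^ 3
      ≤ wzCoeff x 0 * (27 / 64) ^ n * (16 * (n + 2) ^ 4 * Real.exp (Real.pi * y)) ^ 3 := by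
        gcongr
        · exact wzCoeff_le hx₁ n
        · exact norm_pochQuot_le hx hu hv hu' hv' n
    _ = _ := by
        rw [mul_pow, ← Real.exp_nat_mul, Nat.cast_ofNat, mul_assoc 3 Real.pi]
        ring

end PochQuot

section Summand

variable {x : ℝ} {z : ℂ}

/-- The polynomial factor of `wzTerm`; at `z = 1/2` it is the factor `74 N² + 27 N + 3` of the
theorem, up to the constant `48`. -/
noncomputable def wzPoly (N : ℝ) (z : ℂ) : ℂ :=
  (3 * N + 1) / (2 * N + 1) ^ 3 * (z - 1 / 2) ^ 4 -
    (5 * N + 1) / (2 * (2 * N + 1)) * (z - 1 / 2) ^ 2 + (74 * N ^ 2 + 27 * N + 3) / 48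

/-- The summand of the Wilf–Zeilberger pair, an extension of the summand of the theorem (its value
at `z = 1/2`) to a function of `z` that is invariant under `z ↦ 1 - z`. -/
noncomputable def wzTerm (x : ℝ) (n : ℕ) (z : ℂ) : ℂ :=
  wzCoeff x n * pochQuot x n z (1 - z) ^ 3 * wzPoly (n + x) z

/-- The sum of `wzTerm` over `n`. -/
noncomputable def wzSum (x : ℝ) (z : ℂ) : ℂ := ∑' n, wzTerm x n z

theorem wzTerm_one_sub (x : ℝ) (n : ℕ) (z : ℂ) : wzTerm x n (1 - z) = wzTerm x n z := by
  have hpoly : wzPoly (n + x) (1 - z) = wzPoly (n + x) z := by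
    unfold wzPoly
    ring
  rw [wzTerm, wzTerm, hpoly, sub_sub_cancel, pochQuot_comm]

theorem wzSum_one_sub (x : ℝ) (z : ℂ) : wzSum x (1 - z) = wzSum x z := by
  simp only [wzSum, wzTerm_one_sub]

theorem abs_wzPoly_coeff_four_le {N : ℝ} (hN : -1 / 4 < N) :
    |(3 * N + 1) / (2 * N + 1) ^ 3| ≤ 24 * (N + 1) := by
  have hden : (1 / 2) ^ 3 ≤ (2 * N + 1) ^ 3 := pow_le_pow_left₀ (by norm_num) (by linarith) 3
  rw [abs_of_pos (div_pos (by linarith) (by linarith)), div_le_iff₀ (by linarith)]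
  nlinarith

theorem abs_wzPoly_coeff_two_le {N : ℝ} (hN : -1 / 4 < N) :
    |(5 * N + 1) / (2 * (2 * N + 1))| ≤ 5 * (N + 1) := by
  have hnum : |5 * N + 1| ≤ 5 * (N + 1) := abs_le.2 ⟨by linarith, by linarith⟩
  rw [abs_div, abs_of_pos (by linarith : 0 < 2 * (2 * N + 1))]
  exact (div_le_self (abs_nonneg _) (by linarith)).trans hnum

theorem abs_wzPoly_coeff_zero_le {N : ℝ} (hN : -1 / 4 < N) :
    |(74 * N ^ 2 + 27 * N + 3) / 48| ≤ 3 * (N + 1) ^ 2 := by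
  rw [abs_le]
  constructor <;> nlinarith

theorem norm_wzPoly_le {N : ℝ} (hN : -1 / 4 < N) (z : ℂ) :
    ‖wzPoly N z‖ ≤ 42 * (N + 1) ^ 2 * (1 + ‖z - 1 / 2‖ ^ 2) ^ 2 := by
  set r := ‖z - 1 / 2‖ ^ 2 with hr
  have : 0 ≤ r := sq_nonneg _
  have hN₁ : N + 1 ≤ 4 / 3 * (N + 1) ^ 2 := by nlinarith
  have hcoe : wzPoly N z = ((3 * N + 1) / (2 * N + 1) ^ 3 : ℝ) * (z - 1 / 2) ^ 4 -
      ((5 * N + 1) / (2 * (2 * N + 1)) : ℝ) * (z - 1 / 2) ^ 2 +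
      ((74 * N ^ 2 + 27 * N + 3) / 48 : ℝ) := by
    rw [wzPoly]
    push_cast
    ring
  calc ‖wzPoly N z‖ ≤ |(3 * N + 1) / (2 * N + 1) ^ 3| * r ^ 2 +
        |(5 * N + 1) / (2 * (2 * N + 1))| * r + |(74 * N ^ 2 + 27 * N + 3) / 48| := by
        rw [hcoe]
        refine (norm_add_le _ _).trans (add_le_add ((norm_sub_le _ _).trans_eq ?_) ?_)
        · rw [norm_mul, norm_mul, norm_pow, norm_pow, Complex.norm_real, Complex.norm_real,
            Real.norm_eq_abs, Real.norm_eq_abs, hr, ← pow_mul]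
        · rw [Complex.norm_real, Real.norm_eq_abs]
    _ ≤ 24 * (N + 1) * r ^ 2 + 5 * (N + 1) * r + 3 * (N + 1) ^ 2 := by
        gcongr
        · exact abs_wzPoly_coeff_four_le hN
        · exact abs_wzPoly_coeff_two_le hN
        · exact abs_wzPoly_coeff_zero_le hN
    _ ≤ 24 * (4 / 3 * (N + 1) ^ 2) * r ^ 2 + 5 * (4 / 3 * (N + 1) ^ 2) * r +
          3 * (N + 1) ^ 2 := by gcongr
    _ ≤ 42 * (N + 1) ^ 2 * (1 + r) ^ 2 := by
        have : 0 ≤ (N + 1) ^ 2 * r := by positivity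
        have : 0 ≤ (N + 1) ^ 2 * r ^ 2 := by positivity
        linarith [sq_nonneg (N + 1)]

theorem sq_add_hundred_le_exp (y : ℝ) : y ^ 2 + 100 ≤ 100 * Real.exp (|y| / 5) := by
  have hsq : Real.exp (|y| / 5) = Real.exp (|y| / 10) ^ 2 := by
    rw [← Real.exp_nat_mul]
    ring_nf
  calc y ^ 2 + 100 ≤ 100 * (|y| / 10 + 1) ^ 2 := by
        rw [← sq_abs y]
        linarith [abs_nonneg y]
    _ ≤ 100 * Real.exp (|y| / 10) ^ 2 := by
        gcongr
        exact Real.add_one_le_exp _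
    _ = _ := by rw [hsq]

theorem norm_wzPoly_le_exp (hx₁ : -1 / 4 < x) (hx₂ : x < 1 / 4) (n : ℕ) (hz₁ : 1 / 4 < z.re)
    (hz₂ : z.re < 2) : ‖wzPoly (n + x) z‖ ≤
      42 * 10 ^ 4 * (n + 2) ^ 2 * Real.exp (2 / 5 * |z.im|) := by
  have : (0 : ℝ) ≤ n := n.cast_nonneg
  have hr : 1 + ‖z - 1 / 2‖ ^ 2 ≤ 100 * Real.exp (|z.im| / 5) := by
    refine le_trans ?_ (sq_add_hundred_le_exp z.im)
    rw [← Complex.normSq_eq_norm_sq, Complex.normSq_apply]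
    norm_num
    nlinarith
  calc ‖wzPoly (n + x) z‖ ≤ 42 * (n + x + 1) ^ 2 * (1 + ‖z - 1 / 2‖ ^ 2) ^ 2 :=
        norm_wzPoly_le (by linarith) z
    _ ≤ 42 * (n + 2) ^ 2 * (100 * Real.exp (|z.im| / 5)) ^ 2 := by
        have : (n : ℝ) + x + 1 ≤ n + 2 := by linarith
        have : 0 ≤ (n : ℝ) + x + 1 := by linarith
        gcongr ?_ * ?_ ^ 2 * ?_ ^ 2
    _ = _ := by
        rw [mul_pow, ← Real.exp_nat_mul]
        push_cast
        ring_nf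

theorem norm_wzTerm_le (hx₁ : -1 / 4 < x) (hx₂ : x < 1 / 4) (hz₁ : 1 / 4 < z.re)
    (hz₂ : z.re < 2) (n : ℕ) : ‖wzTerm x n z‖ ≤
      wzCoeff x 0 * 4096 * (42 * 10 ^ 4) * ((n + 2) ^ 14 * (27 / 64) ^ n) *
        Real.exp ((3 * Real.pi + 2 / 5) * |z.im|) := by
  have := (wzCoeff_pos hx₁ 0).le
  have hprod := wzCoeff_mul_norm_pochQuot_le (u := z) (v := 1 - z) (y := |z.im|) hx₁ hx₂
    (abs_le.2 ⟨by linarith, hz₂.le⟩)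
    (abs_le.2 ⟨by rw [Complex.sub_re, Complex.one_re]; linarith,
      by rw [Complex.sub_re, Complex.one_re]; linarith⟩)
    le_rfl (by simp) n
  rw [wzTerm, norm_mul, norm_mul, norm_pow, Complex.norm_of_nonneg (wzCoeff_pos hx₁ n).le]
  calc _ ≤ _ := mul_le_mul hprod (norm_wzPoly_le_exp hx₁ hx₂ n hz₁ hz₂) (norm_nonneg _)
        (by positivity)
    _ = _ := by
        rw [add_mul, Real.exp_add]
        ring

theorem summable_wzTerm_bound (k : ℕ) :
    Summable fun n : ℕ => ((n : ℝ) + 2) ^ k * (27 / 64) ^ n :=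
  summable_add_const_pow_mul_geometric 2 k (by norm_num)

theorem summable_wzTerm (hx₁ : -1 / 4 < x) (hx₂ : x < 1 / 4) (hz₁ : 1 / 4 < z.re)
    (hz₂ : z.re < 2) : Summable fun n => wzTerm x n z :=
  .of_norm_bounded (((summable_wzTerm_bound 14).mul_left _).mul_right _)
    (norm_wzTerm_le hx₁ hx₂ hz₁ hz₂)

theorem exists_norm_wzSum_le (hx₁ : -1 / 4 < x) (hx₂ : x < 1 / 4) :
    ∃ C, ∀ z : ℂ, 1 / 4 < z.re → z.re < 2 →
      ‖wzSum x z‖ ≤ C * Real.exp ((3 * Real.pi + 2 / 5) * |z.im|) :=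
  ⟨_, fun _ hz₁ hz₂ => tsum_of_norm_bounded
    (((summable_wzTerm_bound 14).mul_left _).hasSum.mul_right _)
    (norm_wzTerm_le hx₁ hx₂ hz₁ hz₂)⟩

theorem differentiable_wzTerm (x : ℝ) (n : ℕ) : Differentiable ℂ (wzTerm x n) := by
  unfold wzTerm wzPoly pochQuot
  fun_prop

theorem differentiableOn_wzSum (hx₁ : -1 / 4 < x) (hx₂ : x < 1 / 4) :
    DifferentiableOn ℂ (wzSum x) {z | 1 / 4 < z.re ∧ z.re < 2} := by
  intro z hz
  let U : Set ℂ := {w | 1 / 4 < w.re ∧ w.re < 2} ∩ {w | |w.im| < |z.im| + 1}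
  have hU : IsOpen U := (isOpen_strip _ _).inter
    (isOpen_lt (continuous_abs.comp Complex.continuous_im) continuous_const)
  have hd : DifferentiableOn ℂ (wzSum x) U := by
    refine Complex.differentiableOn_tsum_of_summable_norm
      (((summable_wzTerm_bound 14).mul_left (wzCoeff x 0 * 4096 * (42 * 10 ^ 4))).mul_right
        (Real.exp ((3 * Real.pi + 2 / 5) * (|z.im| + 1))))
      (fun n => (differentiable_wzTerm x n).differentiableOn) hU fun n w hw => ?_
    refine (norm_wzTerm_le hx₁ hx₂ hw.1.1 hw.1.2 n).trans ?_
    have := wzCoeff_pos hx₁ 0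
    have : |w.im| ≤ |z.im| + 1 := le_of_lt hw.2
    gcongr
  exact (hd.differentiableAt (hU.mem_nhds ⟨hz, by simp⟩)).differentiableWithinAt

end Summand

/-! ### The periodic function -/

section WZPair

variable {x : ℝ} {z : ℂ}

theorem wzPoly_add_one {N : ℝ} (hN : 0 < 2 * N + 1) (z : ℂ) :
    (z + N) ^ 3 * wzPoly N (z + 1) - (z - N) ^ 3 * wzPoly N z =
      9 / 4 * (N + 1 / 3) * (N + 2 / 3) * (z ^ 2 - N ^ 2) ^ 3 / (N + 1 / 2) ^ 3 +
        16 / 3 * N ^ 5 := by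
  obtain ⟨D, hD⟩ : ∃ D : ℂ, D = 2 * N + 1 := ⟨_, rfl⟩
  have hD₀ : D ≠ 0 := by
    rw [hD]
    exact_mod_cast hN.ne'
  have hN : (N : ℂ) = (D - 1) / 2 := by
    rw [hD]
    ring
  have hhalf : (N + 1 / 2 : ℂ) = D / 2 := by
    rw [hD]
    ring
  rw [hhalf, wzPoly, wzPoly, ← hD, hN]
  field_simp
  ring

theorem pochQuot_one_sub_mul_sub (x : ℝ) (n : ℕ) (z : ℂ) :
    pochQuot x n z (1 - z) * (z - x) = pochQuot x n z (-z) * (z - (n + x)) := by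
  have h := pochQuot_mul_add x n z (-z)
  rw [neg_add_eq_sub] at h
  linear_combination -h

theorem pochQuot_add_one_mul_add (x : ℝ) (n : ℕ) (z : ℂ) :
    pochQuot x n (z + 1) (-z) * (z + x) = pochQuot x n z (-z) * (z + (n + x)) := by
  rw [pochQuot_comm, pochQuot_mul_add, pochQuot_comm]
  ring

theorem sub_pow_three_mul_wzTerm (x : ℝ) (n : ℕ) (z : ℂ) :
    (z - x) ^ 3 * wzTerm x n z =
      wzCoeff x n * pochQuot x n z (-z) ^ 3 * ((z - (n + x)) ^ 3 * wzPoly (n + x) z) :=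
  calc _ = wzCoeff x n * (pochQuot x n z (1 - z) * (z - x)) ^ 3 * wzPoly (n + x) z := by
        rw [wzTerm]
        ring
    _ = _ := by
        rw [pochQuot_one_sub_mul_sub]
        ring

theorem add_pow_three_mul_wzTerm_add_one (x : ℝ) (n : ℕ) (z : ℂ) :
    (z + x) ^ 3 * wzTerm x n (z + 1) =
      wzCoeff x n * pochQuot x n z (-z) ^ 3 * ((z + (n + x)) ^ 3 * wzPoly (n + x) (z + 1)) :=
  calc _ = wzCoeff x n * (pochQuot x n (z + 1) (-z) * (z + x)) ^ 3 * wzPoly (n + x) (z + 1) := by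
        rw [wzTerm, sub_add_cancel_right]
        ring
    _ = _ := by
        rw [pochQuot_add_one_mul_add]
        ring

/-- The companion of `wzTerm` in the Wilf–Zeilberger pair: its differences in `n` are the
differences in `z` of `(z - x)³ Γ(z + x)³ / Γ(z + 1 - x)³ * wzTerm x n z`, up to the Gamma factors;
see `wzTerm_add_one`. -/
noncomputable def wzCompanion (x : ℝ) (n : ℕ) (z : ℂ) : ℂ :=
  16 / 3 * (n + x) ^ 5 * (wzCoeff x n * pochQuot x n z (-z) ^ 3)

theorem wzCompanion_zero (x : ℝ) (z : ℂ) :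
    wzCompanion x 0 z = 16 / 3 * x ^ 5 * wzCoeff x 0 := by
  rw [wzCompanion, pochQuot_zero, Nat.cast_zero, zero_add, one_pow, mul_one]

theorem wzCompanion_succ (hx₁ : -1 / 4 < x) (n : ℕ) (z : ℂ) :
    wzCompanion x (n + 1) z = -(wzCoeff x n * pochQuot x n z (-z) ^ 3 *
      (9 / 4 * (n + x + 1 / 3) * (n + x + 2 / 3) * (z ^ 2 - (n + x) ^ 2) ^ 3 /
        (n + x + 1 / 2) ^ 3)) := by
  have hcoeff : (wzCoeff x (n + 1) : ℂ) * (64 * (n + x + 1) ^ 5) =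
      wzCoeff x n * (27 * (n + x + 1 / 2) ^ 3 * (n + x + 1 / 3) * (n + x + 2 / 3)) := by
    have h := congrArg ((↑) : ℝ → ℂ) (wzCoeff_succ hx₁ n)
    push_cast at h
    exact h
  have : (n + x + 1 / 2 : ℂ) ≠ 0 := by
    have h : (n + x + 1 / 2 : ℝ) ≠ 0 := by linarith [n.cast_nonneg (α := ℝ)]
    simpa using Complex.ofReal_ne_zero.2 h
  rw [wzCompanion, pochQuot_succ, Nat.cast_add_one, add_right_comm, add_right_comm (1 / 2 : ℂ),
    add_comm (1 / 2 + _ : ℂ)]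
  calc _ = 1 / 12 * (wzCoeff x (n + 1) * (64 * (n + x + 1) ^ 5)) * pochQuot x n z (-z) ^ 3 *
        ((z + x + n) * (-z + x + n) / (n + x + 1 / 2) ^ 2) ^ 3 := by ring
    _ = _ := by
        rw [hcoeff]
        field_simp
        ring

theorem summable_wzCompanion (hx₁ : -1 / 4 < x) (hx₂ : x < 1 / 4) (hz₁ : 1 / 4 < z.re)
    (hz₂ : z.re < 2) : Summable fun n => wzCompanion x n z := by
  refine .of_norm_bounded (((summable_wzTerm_bound 17).mul_left
    (16 / 3 * wzCoeff x 0 * 4096)).mul_right (Real.exp (3 * Real.pi * |z.im|))) fun n => ?_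
  have : (0 : ℝ) ≤ n := n.cast_nonneg
  have hprod := wzCoeff_mul_norm_pochQuot_le (u := z) (v := -z) (y := |z.im|) hx₁ hx₂
    (abs_le.2 ⟨by linarith, hz₂.le⟩) (by rw [Complex.neg_re, abs_neg, abs_le]; constructor <;>
      linarith) le_rfl (by simp) n
  have hlin : ‖(n + x : ℂ)‖ ≤ n + 2 := by
    rw [← Complex.ofReal_natCast, ← Complex.ofReal_add, Complex.norm_real, Real.norm_eq_abs, abs_le]
    constructor <;> linarith
  rw [wzCompanion, norm_mul, norm_mul, norm_mul, norm_pow, norm_pow,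
    Complex.norm_of_nonneg (wzCoeff_pos hx₁ n).le]
  calc _ ≤ ‖(16 / 3 : ℂ)‖ * (n + 2) ^ 5 * (wzCoeff x 0 * 4096 * ((n + 2) ^ 12 *
        (27 / 64) ^ n) * Real.exp (3 * Real.pi * |z.im|)) := by
        refine mul_le_mul (by gcongr) hprod ?_ (by positivity)
        exact mul_nonneg (wzCoeff_pos hx₁ n).le (by positivity)
    _ = _ := by
        norm_num
        ring

theorem wzTerm_add_one (hx₁ : -1 / 4 < x) (n : ℕ) (z : ℂ) :
    (z + x) ^ 3 * wzTerm x n (z + 1) - (z - x) ^ 3 * wzTerm x n z =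
      wzCompanion x n z - wzCompanion x (n + 1) z := by
  have hpoly := wzPoly_add_one (N := n + x) (by linarith [n.cast_nonneg (α := ℝ)]) z
  push_cast at hpoly
  rw [add_pow_three_mul_wzTerm_add_one, sub_pow_three_mul_wzTerm, wzCompanion_succ hx₁,
    wzCompanion]
  linear_combination (wzCoeff x n * pochQuot x n z (-z) ^ 3) * hpoly

theorem wzSum_add_one (hx₁ : -1 / 4 < x) (hx₂ : x < 1 / 4) (hz₁ : 1 / 4 < z.re)
    (hz₂ : z.re < 1) : (z + x) ^ 3 * wzSum x (z + 1) - (z - x) ^ 3 * wzSum x z =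
      16 / 3 * x ^ 5 * wzCoeff x 0 := by
  have hsum := summable_wzTerm hx₁ hx₂ hz₁ (hz₂.trans one_lt_two)
  have hsum_add_one : Summable fun n => wzTerm x n (z + 1) :=
    summable_wzTerm hx₁ hx₂ (by rw [Complex.add_re, Complex.one_re]; linarith)
      (by rw [Complex.add_re, Complex.one_re]; linarith)
  have hcomp := summable_wzCompanion hx₁ hx₂ hz₁ (hz₂.trans one_lt_two)
  calc _ = ∑' n, ((z + x) ^ 3 * wzTerm x n (z + 1) - (z - x) ^ 3 * wzTerm x n z) := by
        rw [(hsum_add_one.mul_left _).tsum_sub (hsum.mul_left _), tsum_mul_left, tsum_mul_left,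
          wzSum, wzSum]
    _ = ∑' n, (wzCompanion x n z - wzCompanion x (n + 1) z) :=
        tsum_congr fun n => wzTerm_add_one hx₁ n z
    _ = wzCompanion x 0 z := by
        rw [hcomp.tsum_sub ((summable_nat_add_iff 1).2 hcomp), hcomp.tsum_eq_zero_add,
          add_sub_cancel_right]
    _ = _ := wzCompanion_zero x z

end WZPair

section PeriodicFunction

variable {x : ℝ} {z : ℂ}

/-- The function `(z - x)³ Γ(z + x)³ / Γ(z + 1 - x)³ * wzSum x z` corrected by the multiple of
`gammaRatioSum x z` that makes it periodic. -/
noncomputable def wzFun (x : ℝ) (z : ℂ) : ℂ :=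
  (z - x) ^ 3 * gammaRatio x z ^ 3 * wzSum x z +
    16 / 3 * x ^ 5 * wzCoeff x 0 * gammaRatioSum x z

theorem wzFun_add_one (hx₁ : -1 / 4 < x) (hx₂ : x < 1 / 4) (hz₁ : 1 / 4 < z.re)
    (hz₂ : z.re < 1) : wzFun x (z + 1) = wzFun x z := by
  have hratio : (z + 1 - x) ^ 3 * gammaRatio x (z + 1) ^ 3 = gammaRatio x z ^ 3 * (z + x) ^ 3 := by
    rw [← mul_pow, ← mul_pow, mul_comm, gammaRatio_add_one hx₁ hx₂ hz₁.le]
  rw [wzFun, wzFun, gammaRatioSum_eq_add hx₁ hx₂ hz₁.le, hratio]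
  linear_combination gammaRatio x z ^ 3 * wzSum_add_one hx₁ hx₂ hz₁ hz₂

theorem differentiableOn_wzFun (hx₁ : -1 / 4 < x) (hx₂ : x < 1 / 4) :
    DifferentiableOn ℂ (wzFun x) {z | 1 / 4 < z.re ∧ z.re < 2} := by
  have hsub : {z : ℂ | 1 / 4 < z.re ∧ z.re < 2} ⊆ {z | 1 / 4 < z.re} := fun z hz => hz.1
  have hratio := (differentiableOn_gammaRatio hx₁ hx₂).mono hsub
  have hsum := differentiableOn_wzSum hx₁ hx₂
  have hratioSum := (differentiableOn_gammaRatioSum hx₁ hx₂).mono hsub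
  unfold wzFun
  fun_prop

theorem norm_sub_ofReal_le_exp (hx₁ : -1 / 4 < x) (hx₂ : x < 1 / 4) (hz₁ : 1 / 4 < z.re)
    (hz₂ : z.re < 2) : ‖z - x‖ ≤ 10 * Real.exp (|z.im| / 10) := by
  have hnorm := Complex.norm_le_abs_re_add_abs_im (z - x)
  have hre : |(z - x).re| ≤ 9 / 4 := by
    rw [Complex.sub_re, Complex.ofReal_re]
    exact abs_le.2 ⟨by linarith, by linarith⟩
  rw [Complex.sub_im, Complex.ofReal_im, sub_zero] at hnorm
  linarith [Real.add_one_le_exp (|z.im| / 10)]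

theorem exists_norm_wzFun_le (hx₁ : -1 / 4 < x) (hx₂ : x < 1 / 4) :
    ∃ C, ∀ z : ℂ, 1 / 4 < z.re → z.re < 2 →
      ‖wzFun x z‖ ≤ C * Real.exp ((3 * Real.pi + 7 / 10) * |z.im|) := by
  obtain ⟨C, hC⟩ := exists_norm_wzSum_le hx₁ hx₂
  refine ⟨1000 * gammaRatioBound x 0 ^ 3 * C +
    ‖(16 / 3 * x ^ 5 * wzCoeff x 0 : ℂ)‖ * ∑' k, gammaRatioBound x k ^ 3, fun z hz₁ hz₂ => ?_⟩
  have hratio : ‖gammaRatio x z‖ ≤ gammaRatioBound x 0 := by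
    simpa using norm_gammaRatio_add_le hx₁ hx₂ hz₁.le 0
  have : 0 ≤ gammaRatioBound x 0 := (gammaRatioBound_pos hx₁ hx₂ 0).le
  have : 0 ≤ ∑' k, gammaRatioBound x k ^ 3 :=
    tsum_nonneg fun k => pow_nonneg (gammaRatioBound_pos hx₁ hx₂ k).le 3
  have hexp : 1 ≤ Real.exp ((3 * Real.pi + 7 / 10) * |z.im|) :=
    Real.one_le_exp (by positivity)
  have hexp_split : Real.exp ((3 * Real.pi + 7 / 10) * |z.im|) =
      Real.exp (|z.im| / 10) ^ 3 * Real.exp ((3 * Real.pi + 2 / 5) * |z.im|) := by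
    rw [← Real.exp_nat_mul, ← Real.exp_add]
    push_cast
    ring_nf
  rw [wzFun, add_mul]
  refine (norm_add_le _ _).trans (add_le_add ?_ ?_)
  · rw [norm_mul, norm_mul, norm_pow, norm_pow]
    calc _ ≤ (10 * Real.exp (|z.im| / 10)) ^ 3 * gammaRatioBound x 0 ^ 3 *
          (C * Real.exp ((3 * Real.pi + 2 / 5) * |z.im|)) := by
          gcongr
          · exact norm_sub_ofReal_le_exp hx₁ hx₂ hz₁ hz₂
          · exact hC z hz₁ hz₂
      _ = _ := by
          rw [hexp_split]
          ring
  · rw [norm_mul _ (gammaRatioSum x z)]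
    calc _ ≤ ‖(16 / 3 * x ^ 5 * wzCoeff x 0 : ℂ)‖ * ∑' k, gammaRatioBound x k ^ 3 := by
          gcongr
          exact norm_gammaRatioSum_le hx₁ hx₂ hz₁.le
      _ ≤ _ := le_mul_of_one_le_right (by positivity) hexp

theorem exists_wzFun_eq (hx₁ : -1 / 4 < x) (hx₂ : x < 1 / 4) :
    ∃ c₀ c₁ c₂ : ℂ, ∀ z : ℂ, 1 / 4 < z.re → z.re < 2 →
      wzFun x z = c₀ + c₁ * Complex.exp (2 * Real.pi * Complex.I * z) +
        c₂ * Complex.exp (-(2 * Real.pi * Complex.I * z)) := by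
  obtain ⟨C, hC⟩ := exists_norm_wzFun_le hx₁ hx₂
  exact eq_trigPolynomial_of_growth_strip (by norm_num) (differentiableOn_wzFun hx₁ hx₂)
    (fun z hz₁ hz₂ => wzFun_add_one hx₁ hx₂ hz₁ (by linarith))
    (by linarith [Real.pi_gt_three]) hC

end PeriodicFunction

section Symmetry

variable {x : ℝ} {z : ℂ}

theorem sin_mul_gammaRatio (h₀ : 0 < (z + x).re) (h₁ : (z + x).re < 1) (hsub : 0 < (z - x).re) :
    Complex.sin (Real.pi * (z + x)) * ((z - x) * gammaRatio x z) =
      Real.pi / (Complex.Gamma (1 - z - x) * Complex.Gamma (z - x)) := by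
  have hΓ := Complex.Gamma_ne_zero_of_re_pos h₀
  have hΓ₁ : Complex.Gamma (1 - z - x) ≠ 0 := Complex.Gamma_ne_zero_of_re_pos (by
    rw [sub_sub, Complex.sub_re, Complex.one_re]
    linarith)
  have hΓ₂ := Complex.Gamma_ne_zero_of_re_pos hsub
  have hne : z - x ≠ 0 := fun h => by
    rw [h, Complex.zero_re] at hsub
    exact hsub.false
  have hrefl := Complex.Gamma_mul_Gamma_one_sub (z + x)
  rw [← sub_sub] at hrefl
  have hsin : Complex.sin (Real.pi * (z + x)) ≠ 0 := fun h => by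
    rw [h, div_zero] at hrefl
    exact mul_ne_zero hΓ hΓ₁ hrefl
  rw [eq_div_iff hsin] at hrefl
  rw [gammaRatio, add_sub_right_comm z, Complex.Gamma_add_one _ hne,
    eq_div_iff (mul_ne_zero hΓ₁ hΓ₂)]
  field_simp
  linear_combination hrefl

-- The closed form of `sin_mul_gammaRatio` is symmetric under `z ↦ 1 - z`, and so is `wzSum`.
theorem sin_pow_three_mul_wzFun_sub (hx₁ : -1 / 4 < x) (hx₂ : x < 1 / 4) (hz : z.re = 1 / 2) :
    Complex.sin (Real.pi * (z + x)) ^ 3 * wzFun x z -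
      Complex.sin (Real.pi * (1 - z + x)) ^ 3 * wzFun x (1 - z) =
    16 / 3 * x ^ 5 * wzCoeff x 0 * (Complex.sin (Real.pi * (z + x)) ^ 3 * gammaRatioSum x z -
      Complex.sin (Real.pi * (1 - z + x)) ^ 3 * gammaRatioSum x (1 - z)) := by
  have hclosed : ∀ w : ℂ, w.re = 1 / 2 →
      Complex.sin (Real.pi * (w + x)) * ((w - x) * gammaRatio x w) =
        Real.pi / (Complex.Gamma (1 - w - x) * Complex.Gamma (w - x)) := fun w hw =>
    sin_mul_gammaRatio (by rw [Complex.add_re, Complex.ofReal_re]; linarith)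
      (by rw [Complex.add_re, Complex.ofReal_re]; linarith)
      (by rw [Complex.sub_re, Complex.ofReal_re]; linarith)
  have hsymm := hclosed (1 - z) (by rw [Complex.sub_re, Complex.one_re, hz]; norm_num)
  rw [sub_sub_cancel, mul_comm (Complex.Gamma (z - x)), ← hclosed z hz] at hsymm
  have hcube := congrArg (fun w => w ^ 3 * wzSum x z) hsymm
  simp only [mul_pow] at hcube
  rw [wzFun, wzFun, wzSum_one_sub]
  linear_combination -hcube

theorem two_mul_I_mul_exp_mul_sin (u v : ℂ) :
    2 * Complex.I * Complex.exp (u * Complex.I) * Complex.sin v =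
      Complex.exp ((u + v) * Complex.I) - Complex.exp ((u - v) * Complex.I) := by
  rw [add_mul, sub_eq_add_neg u, add_mul, Complex.exp_add, Complex.exp_add, Complex.sin]
  linear_combination (Complex.exp (u * Complex.I) * (Complex.exp (-v * Complex.I) -
    Complex.exp (v * Complex.I))) * Complex.I_sq

theorem two_mul_exp_mul_cos (u v : ℂ) :
    2 * Complex.exp (u * Complex.I) * Complex.cos v =
      Complex.exp ((u + v) * Complex.I) + Complex.exp ((u - v) * Complex.I) := by
  rw [add_mul, sub_eq_add_neg u, add_mul, Complex.exp_add, Complex.exp_add, Complex.cos]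
  ring

theorem exp_two_pi_mul_I_mul_one_sub (z : ℂ) :
    Complex.exp (2 * Real.pi * Complex.I * (1 - z)) =
      (Complex.exp (2 * Real.pi * Complex.I * z))⁻¹ := by
  rw [mul_sub, mul_one, Complex.exp_sub, Complex.exp_two_pi_mul_I, one_div]

theorem exp_mul_wzFun_sub (hx₁ : -1 / 4 < x) (hx₂ : x < 1 / 4) (hz : z.re = 1 / 2) {X P : ℂ}
    (hX : X = Complex.exp (2 * Real.pi * Complex.I * z))
    (hP : P = Complex.exp (2 * Real.pi * Complex.I * x)) :
    (X * P - 1) ^ 3 * wzFun x z - (X - P) ^ 3 * wzFun x (1 - z) =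
      16 / 3 * x ^ 5 * wzCoeff x 0 *
        ((X * P - 1) ^ 3 * gammaRatioSum x z - (X - P) ^ 3 * gammaRatioSum x (1 - z)) := by
  have hsin : X * P - 1 = 2 * Complex.I * Complex.exp (Real.pi * (z + x) * Complex.I) *
      Complex.sin (Real.pi * (z + x)) := by
    rw [two_mul_I_mul_exp_mul_sin, sub_self, zero_mul, Complex.exp_zero, hX, hP, ← Complex.exp_add]
    ring_nf
  have hsin_one_sub : X - P = 2 * Complex.I * Complex.exp (Real.pi * (z + x) * Complex.I) *
      Complex.sin (Real.pi * (1 - z + x)) := by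
    have hadd : (Real.pi * (z + x) + Real.pi * (1 - z + x)) * Complex.I =
        2 * Real.pi * Complex.I * x + Real.pi * Complex.I := by ring
    have hsub : (Real.pi * (z + x) - Real.pi * (1 - z + x)) * Complex.I =
        2 * Real.pi * Complex.I * z - Real.pi * Complex.I := by ring
    rw [two_mul_I_mul_exp_mul_sin, hadd, hsub, Complex.exp_add, Complex.exp_sub,
      Complex.exp_pi_mul_I, ← hX, ← hP]
    ring
  rw [hsin, hsin_one_sub]
  linear_combination (2 * Complex.I * Complex.exp (Real.pi * (z + x) * Complex.I)) ^ 3 *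
    sin_pow_three_mul_wzFun_sub hx₁ hx₂ hz

theorem tendsto_exp_half_add_mul_I : Tendsto
    (fun y : ℝ => Complex.exp (2 * Real.pi * Complex.I * (1 / 2 + y * Complex.I))) atTop (𝓝 0) := by
  have hre : ∀ y : ℝ,
      (2 * Real.pi * Complex.I * (1 / 2 + y * Complex.I)).re = -(2 * Real.pi * y) := fun y => by
    simp
  rw [tendsto_zero_iff_norm_tendsto_zero]
  simp only [Complex.norm_exp, hre]
  exact Real.tendsto_exp_neg_atTop_nhds_zero.comp
    (tendsto_id.const_mul_atTop Real.two_pi_pos)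

theorem tendsto_exp_mul_wzFun_sub (hx₁ : -1 / 4 < x) (hx₂ : x < 1 / 4) {z X : ℝ → ℂ} {P : ℂ}
    (hz : ∀ y, z y = 1 / 2 + y * Complex.I)
    (hX : ∀ y, X y = Complex.exp (2 * Real.pi * Complex.I * z y))
    (hP : P = Complex.exp (2 * Real.pi * Complex.I * x)) :
    Tendsto (fun y => (X y * P - 1) ^ 3 * wzFun x (z y) - (X y - P) ^ 3 * wzFun x (1 - z y))
      atTop (𝓝 0) := by
  have hre : ∀ y, (z y).re = 1 / 2 := fun y => by simp [hz]
  have him : ∀ y, (z y).im = y := fun y => by simp [hz]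
  have hX₀ : Tendsto X atTop (𝓝 0) :=
    tendsto_exp_half_add_mul_I.congr fun y => by rw [hX, hz]
  have hsum : Tendsto (fun y => gammaRatioSum x (z y)) atTop (𝓝 0) :=
    tendsto_gammaRatioSum hx₁ hx₂ (fun y => by rw [hre]; norm_num)
      (by simpa only [him] using tendsto_abs_atTop_atTop)
  have hsum_one_sub : Tendsto (fun y => gammaRatioSum x (1 - z y)) atTop (𝓝 0) :=
    tendsto_gammaRatioSum hx₁ hx₂ (fun y => by rw [Complex.sub_re, Complex.one_re, hre]; norm_num)
      (by simpa [him] using tendsto_abs_atTop_atTop)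
  have hlim : Tendsto (fun y => 16 / 3 * x ^ 5 * wzCoeff x 0 *
      ((X y * P - 1) ^ 3 * gammaRatioSum x (z y) - (X y - P) ^ 3 * gammaRatioSum x (1 - z y)))
      atTop (𝓝 (16 / 3 * x ^ 5 * wzCoeff x 0 * ((0 * P - 1) ^ 3 * 0 - (0 - P) ^ 3 * 0))) :=
    (((((hX₀.mul_const _).sub_const 1).pow 3).mul hsum).sub
      (((hX₀.sub_const _).pow 3).mul hsum_one_sub)).const_mul _
  simp only [mul_zero, sub_zero] at hlim
  exact hlim.congr fun y => (exp_mul_wzFun_sub hx₁ hx₂ (hre y) (hX y) hP).symm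

end Symmetry

section FourierCoefficients

variable {ι : Type*} {l : Filter ι} [l.NeBot] {X : ι → ℂ} {c₀ c₁ c₂ P : ℂ}

theorem eq_zero_of_tendsto_comp {f : ℂ → ℂ} (hX : Tendsto X l (𝓝 0)) (hf : Continuous f)
    (h : Tendsto (fun i => f (X i)) l (𝓝 0)) : f 0 = 0 :=
  tendsto_nhds_unique ((hf.tendsto 0).comp hX) h

theorem eq_pow_three_mul_of_tendsto (hX : Tendsto X l (𝓝 0)) (hX₀ : ∀ i, X i ≠ 0)
    (h : Tendsto (fun i => (X i * P - 1) ^ 3 * (c₀ + c₁ * X i + c₂ * (X i)⁻¹) -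
      (X i - P) ^ 3 * (c₀ + c₁ * (X i)⁻¹ + c₂ * X i)) l (𝓝 0)) :
    c₂ = P ^ 3 * c₁ := by
  have hmul : Tendsto (fun i => (X i * P - 1) ^ 3 * (c₀ * X i + c₁ * X i ^ 2 + c₂) -
      (X i - P) ^ 3 * (c₀ * X i + c₁ + c₂ * X i ^ 2)) l (𝓝 0) := by
    refine (mul_zero (0 : ℂ) ▸ hX.mul h).congr fun i => ?_
    have := hX₀ i
    field_simp
  have hzero := eq_zero_of_tendsto_comp (f := fun t => (t * P - 1) ^ 3 *
    (c₀ * t + c₁ * t ^ 2 + c₂) - (t - P) ^ 3 * (c₀ * t + c₁ + c₂ * t ^ 2)) hX (by fun_prop) hmul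
  linear_combination -hzero

theorem mul_pow_three_sub_one_of_tendsto (hX : Tendsto X l (𝓝 0)) (hX₀ : ∀ i, X i ≠ 0)
    (hc₂ : c₂ = P ^ 3 * c₁)
    (h : Tendsto (fun i => (X i * P - 1) ^ 3 * (c₀ + c₁ * X i + c₂ * (X i)⁻¹) -
      (X i - P) ^ 3 * (c₀ + c₁ * (X i)⁻¹ + c₂ * X i)) l (𝓝 0)) :
    c₀ * (P ^ 3 - 1) = 3 * c₁ * P ^ 2 * (1 - P ^ 2) := by
  have hcancel : Tendsto (fun i => (X i * P - 1) ^ 3 * (c₀ + c₁ * X i) -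
      (X i - P) ^ 3 * (c₀ + c₂ * X i) +
      c₁ * (P ^ 3 * (P ^ 3 * X i ^ 2 - 3 * P ^ 2 * X i + 3 * P) -
        (X i ^ 2 - 3 * P * X i + 3 * P ^ 2))) l (𝓝 0) := by
    refine h.congr fun i => ?_
    have := hX₀ i
    rw [hc₂]
    field_simp
    ring
  have hzero := eq_zero_of_tendsto_comp (f := fun t => (t * P - 1) ^ 3 * (c₀ + c₁ * t) -
    (t - P) ^ 3 * (c₀ + c₂ * t) + c₁ * (P ^ 3 * (P ^ 3 * t ^ 2 - 3 * P ^ 2 * t + 3 * P) -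
      (t ^ 2 - 3 * P * t + 3 * P ^ 2))) hX (by fun_prop) hcancel
  linear_combination hzero

end FourierCoefficients

section HalfPeriod

variable {x : ℝ}

/-- The symmetry under `z ↦ 1 - z` leaves only one of the three coefficients of `wzFun` free. -/
theorem exists_wzFun_eq_and_coeff_relations (hx₁ : -1 / 4 < x) (hx₂ : x < 1 / 4) {P : ℂ}
    (hP : P = Complex.exp (2 * Real.pi * Complex.I * x)) :
    ∃ c₀ c₁ : ℂ, c₀ * (P ^ 3 - 1) = 3 * c₁ * P ^ 2 * (1 - P ^ 2) ∧
      ∀ z : ℂ, 1 / 4 < z.re → z.re < 2 →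
        wzFun x z = c₀ + c₁ * Complex.exp (2 * Real.pi * Complex.I * z) +
          P ^ 3 * c₁ * (Complex.exp (2 * Real.pi * Complex.I * z))⁻¹ := by
  obtain ⟨c₀, c₁, c₂, hwz⟩ := exists_wzFun_eq hx₁ hx₂
  simp only [Complex.exp_neg] at hwz
  set z : ℝ → ℂ := fun y => 1 / 2 + y * Complex.I with hz
  set X : ℝ → ℂ := fun y => Complex.exp (2 * Real.pi * Complex.I * z y)
  have hre : ∀ y, (z y).re = 1 / 2 := fun y => by simp [hz]
  have hval : ∀ y, wzFun x (z y) = c₀ + c₁ * X y + c₂ * (X y)⁻¹ := fun y =>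
    hwz _ (by rw [hre]; norm_num) (by rw [hre]; norm_num)
  have hval_one_sub : ∀ y, wzFun x (1 - z y) = c₀ + c₁ * (X y)⁻¹ + c₂ * X y := fun y => by
    rw [hwz _ (by rw [Complex.sub_re, Complex.one_re, hre]; norm_num)
      (by rw [Complex.sub_re, Complex.one_re, hre]; norm_num), exp_two_pi_mul_I_mul_one_sub,
      inv_inv]
  have hlim := tendsto_exp_mul_wzFun_sub hx₁ hx₂ (z := z) (X := X) (fun _ => rfl) (fun _ => rfl) hP
  simp only [hval, hval_one_sub] at hlim
  have hX₀ : ∀ y, X y ≠ 0 := fun y => Complex.exp_ne_zero _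
  have hc₂ := eq_pow_three_mul_of_tendsto tendsto_exp_half_add_mul_I hX₀ hlim
  exact ⟨c₀, c₁, mul_pow_three_sub_one_of_tendsto tendsto_exp_half_add_mul_I hX₀ hc₂ hlim,
    hc₂ ▸ hwz⟩

theorem exp_two_pi_mul_I_mul_pow_three_ne_one (hx : x ≠ 0) (hx₁ : -1 / 4 < x) (hx₂ : x < 1 / 4) :
    Complex.exp (2 * Real.pi * Complex.I * x) ^ 3 ≠ 1 := by
  rw [← Complex.exp_nat_mul, Ne, Complex.exp_eq_one_iff]
  rintro ⟨n, hn⟩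
  have hn' : (3 * x : ℝ) = n := by
    have h : (3 * x : ℂ) = n := mul_right_cancel₀ Complex.two_pi_I_ne_zero (by
      rw [← hn]
      push_cast
      ring)
    exact_mod_cast h
  have hn₁ : -1 < n := by exact_mod_cast (by linarith : (-1 : ℝ) < n)
  have hn₂ : n < 1 := by exact_mod_cast (by linarith : (n : ℝ) < 1)
  obtain rfl : n = 0 := by omega
  exact hx (by simpa using hn')

theorem four_mul_exp_mul_cos_sq (x : ℝ) :
    4 * Complex.exp (2 * Real.pi * Complex.I * x) * Complex.cos (Real.pi * x) ^ 2 =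
      (Complex.exp (2 * Real.pi * Complex.I * x) + 1) ^ 2 := by
  have h := two_mul_exp_mul_cos (Real.pi * x) (Real.pi * x)
  rw [sub_self, zero_mul, Complex.exp_zero, ← two_mul] at h
  have hexp : Complex.exp (2 * Real.pi * Complex.I * x) =
      Complex.exp (2 * (Real.pi * x) * Complex.I) := by ring_nf
  have hsq : Complex.exp (Real.pi * x * Complex.I) ^ 2 =
      Complex.exp (2 * Real.pi * Complex.I * x) := by
    rw [← Complex.exp_nat_mul]
    push_cast
    ring_nf
  rw [hexp, ← h, ← hexp, ← hsq]
  ring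

theorem wzFun_half_mul (hx : x ≠ 0) (hx₁ : -1 / 4 < x) (hx₂ : x < 1 / 4) :
    wzFun x (1 / 2) * (2 * Real.sin (Real.pi * x) ^ 2 : ℝ) = wzFun x (1 + x) *
      (8 * Real.cos (Real.pi * x) ^ 4 - 8 * Real.cos (Real.pi * x) ^ 2 + 3 : ℝ) := by
  obtain ⟨P, hP⟩ : ∃ P : ℂ, P = Complex.exp (2 * Real.pi * Complex.I * x) := ⟨_, rfl⟩
  have hP₀ : P ≠ 0 := hP ▸ Complex.exp_ne_zero _
  have hP₃ : P ^ 3 - 1 ≠ 0 :=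
    sub_ne_zero.2 (hP ▸ exp_two_pi_mul_I_mul_pow_three_ne_one hx hx₁ hx₂)
  obtain ⟨c₀, c₁, hc, hwz⟩ := exists_wzFun_eq_and_coeff_relations hx₁ hx₂ hP
  have hhalf : (P ^ 3 - 1) * wzFun x (1 / 2) = c₁ * (1 + 3 * P ^ 2 - 3 * P ^ 4 - P ^ 6) := by
    have hexp : Complex.exp (2 * Real.pi * Complex.I * (1 / 2)) = -1 := by
      rw [← Complex.exp_pi_mul_I]
      ring_nf
    rw [hwz _ (by norm_num) (by norm_num), hexp, inv_neg, inv_one]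
    linear_combination hc
  have hone_add : (P ^ 3 - 1) * wzFun x (1 + x) = c₁ * P * (P - 1) ^ 3 * (P + 1) := by
    have hexp : Complex.exp (2 * Real.pi * Complex.I * (1 + x)) = P := by
      rw [mul_add, mul_one, Complex.exp_add, Complex.exp_two_pi_mul_I, one_mul, hP]
    rw [hwz _ (by simp; linarith) (by simp; linarith), hexp]
    field_simp
    linear_combination hc
  have hcos : Complex.cos (Real.pi * x) ^ 2 = (P + 1) ^ 2 / (4 * P) := by
    rw [eq_div_iff (by simp [hP₀]), hP, ← four_mul_exp_mul_cos_sq]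
    ring
  push_cast
  rw [Complex.sin_sq, show 4 = 2 * 2 from rfl, pow_mul, hcos]
  refine mul_left_cancel₀ hP₃ ?_
  rw [← mul_assoc, hhalf, ← mul_assoc (P ^ 3 - 1) (wzFun x (1 + x)), hone_add]
  field_simp
  ring

end HalfPeriod

/-! ### Special values and the identity -/

section GammaValues

variable {x : ℝ}

theorem sin_pi_mul_ne_zero_of_lt (hx : x ≠ 0) (hx₁ : -1 < x) (hx₂ : x < 1) :
    Real.sin (Real.pi * x) ≠ 0 := by
  rcases hx.lt_or_gt with hneg | hpos
  · exact (Real.sin_neg_of_neg_of_neg_pi_lt (mul_neg_of_pos_of_neg Real.pi_pos hneg)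
      (by nlinarith [Real.pi_pos])).ne
  · exact (Real.sin_pos_of_pos_of_lt_pi (mul_pos Real.pi_pos hpos)
      (mul_lt_of_lt_one_right Real.pi_pos hx₂)).ne'

theorem sin_pi_mul_eq (hx₁ : -1 < x) (hx₂ : x < 1) :
    Real.sin (Real.pi * x) = Real.pi * x / (Real.Gamma (1 + x) * Real.Gamma (1 - x)) := by
  have h₁ : Real.Gamma (1 + x) ≠ 0 := (Real.Gamma_pos_of_pos (by linarith)).ne'
  have h₂ : Real.Gamma (1 - x) ≠ 0 := (Real.Gamma_pos_of_pos (by linarith)).ne'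
  rcases eq_or_ne x 0 with rfl | hx
  · simp
  · have hrefl := Real.Gamma_mul_Gamma_one_sub x
    rw [eq_div_iff (sin_pi_mul_ne_zero_of_lt hx hx₁ hx₂)] at hrefl
    rw [eq_div_iff (mul_ne_zero h₁ h₂), add_comm 1 x, Real.Gamma_add_one hx]
    linear_combination x * hrefl

theorem cos_pi_mul_eq (hx : x ≠ 0) (hx₁ : -1 / 2 < x) (hx₂ : x < 1 / 2) :
    Real.cos (Real.pi * x) = Real.Gamma (1 + x) * Real.Gamma (1 - x) /
      (Real.Gamma (1 + 2 * x) * Real.Gamma (1 - 2 * x)) := by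
  have hsin := sin_pi_mul_eq (x := x) (by linarith) (by linarith)
  have hsin_two := sin_pi_mul_eq (x := 2 * x) (by linarith) (by linarith)
  have hsin_ne := sin_pi_mul_ne_zero_of_lt hx (by linarith) (by linarith)
  have h₁ : 0 < Real.Gamma (1 + x) := Real.Gamma_pos_of_pos (by linarith)
  have h₂ : 0 < Real.Gamma (1 - x) := Real.Gamma_pos_of_pos (by linarith)
  rw [mul_left_comm, Real.sin_two_mul] at hsin_two
  refine mul_left_cancel₀ (mul_ne_zero two_ne_zero hsin_ne) ?_
  rw [hsin_two, hsin]
  field_simp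

theorem four_mul_cos_pi_mul_sq_sub_one_eq (hx : x ≠ 0) (hx₁ : -1 / 3 < x) (hx₂ : x < 1 / 3) :
    4 * Real.cos (Real.pi * x) ^ 2 - 1 = 3 * (Real.Gamma (1 + x) * Real.Gamma (1 - x)) /
      (Real.Gamma (1 + 3 * x) * Real.Gamma (1 - 3 * x)) := by
  have hsin := sin_pi_mul_eq (x := x) (by linarith) (by linarith)
  have hsin_three := sin_pi_mul_eq (x := 3 * x) (by linarith) (by linarith)
  have hsin_ne := sin_pi_mul_ne_zero_of_lt hx (by linarith) (by linarith)
  have h₁ : 0 < Real.Gamma (1 + x) := Real.Gamma_pos_of_pos (by linarith)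
  have h₂ : 0 < Real.Gamma (1 - x) := Real.Gamma_pos_of_pos (by linarith)
  rw [mul_left_comm, Real.sin_three_mul] at hsin_three
  refine mul_left_cancel₀ hsin_ne ?_
  calc Real.sin (Real.pi * x) * (4 * Real.cos (Real.pi * x) ^ 2 - 1)
      = 3 * Real.sin (Real.pi * x) - 4 * Real.sin (Real.pi * x) ^ 3 := by
        rw [Real.cos_sq']
        ring
    _ = _ := by
        rw [hsin_three, hsin]
        field_simp

theorem Gamma_half_sub_eq (hx₂ : x < 1) : Real.Gamma (1 / 2 - x) =
    Real.Gamma (1 - 2 * x) * (2 : ℝ) ^ (2 * x) * √Real.pi / Real.Gamma (1 - x) := by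
  have h := Real.Gamma_mul_Gamma_add_half (1 / 2 - x)
  rw [show 1 / 2 - x + 1 / 2 = 1 - x by ring, show 2 * (1 / 2 - x) = 1 - 2 * x by ring,
    sub_sub_cancel] at h
  rw [eq_div_iff (Real.Gamma_pos_of_pos (by linarith)).ne', h]

theorem three_fourths_rpow_three_mul (x : ℝ) :
    (3 / 4 : ℝ) ^ (3 * x) = (27 : ℝ) ^ x / ((2 : ℝ) ^ (2 * x)) ^ 3 := by
  have hden : ((2 : ℝ) ^ (2 * x)) ^ 3 = (64 : ℝ) ^ x := by
    rw [← Real.rpow_mul_natCast (by norm_num), mul_right_comm, Real.rpow_mul (by norm_num)]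
    norm_num
  rw [hden, ← Real.div_rpow (by norm_num) (by norm_num), Real.rpow_mul (by norm_num)]
  norm_num

theorem wzCoeff_zero_right (hx : -1 / 3 < x) :
    wzCoeff x 0 = Real.Gamma (1 / 2 + x) ^ 3 * Real.Gamma (1 + 3 * x) /
      (((2 : ℝ) ^ (2 * x)) ^ 3 * Real.Gamma (1 + x) ^ 6 * √Real.pi ^ 3) := by
  have htri := Gamma_triplication hx
  have : 0 < Real.Gamma (1 / 3) := Real.Gamma_pos_of_pos (by norm_num)
  have : 0 < Real.Gamma (2 / 3) := Real.Gamma_pos_of_pos (by norm_num)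
  have : 0 < Real.Gamma (1 + x) := Real.Gamma_pos_of_pos (by linarith)
  simp only [wzCoeff, Nat.cast_zero, zero_add, pochG, Real.Gamma_one, div_one,
    Real.Gamma_one_half_eq, three_fourths_rpow_three_mul]
  generalize Real.Gamma (1 / 2 + x) = A
  generalize Real.Gamma (1 / 3 + x) = B at htri ⊢
  generalize Real.Gamma (2 / 3 + x) = C at htri ⊢
  generalize Real.Gamma (1 + 3 * x) = D at htri ⊢
  field_simp
  linear_combination A ^ 3 * htri

end GammaValues

section RealValues

variable {x s : ℝ}

theorem Gamma_add_natCast {a : ℝ} (ha : 0 < a) (n : ℕ) :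
    Real.Gamma (a + n) = pochR a n * Real.Gamma a := by
  induction n with
  | zero => rw [Nat.cast_zero, add_zero, pochR_zero, one_mul]
  | succ n ih =>
    rw [Nat.cast_succ, ← add_assoc, Real.Gamma_add_one (by positivity), ih, pochR_succ]
    ring

theorem gammaRatio_ofReal (x s : ℝ) :
    gammaRatio x s = (Real.Gamma (s + x) / Real.Gamma (s + 1 - x) : ℝ) := by
  rw [gammaRatio, Complex.ofReal_div, ← Complex.Gamma_ofReal, ← Complex.Gamma_ofReal]
  push_cast
  rfl

theorem gammaRatio_ofReal_add_natCast (hx₁ : -1 / 4 < x) (hx₂ : x < 1 / 4) (hs : 1 / 4 ≤ s)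
    (k : ℕ) : gammaRatio x (s + k) = (Real.Gamma (s + x) / Real.Gamma (s + 1 - x) *
      (pochR (s + x) k / pochR (s + 1 - x) k) : ℝ) := by
  have h := gammaRatio_ofReal x (s + k)
  rw [add_right_comm s k x, show s + k + 1 - x = s + 1 - x + k by ring,
    Gamma_add_natCast (by linarith), Gamma_add_natCast (by linarith), mul_div_mul_comm, mul_comm,
    Complex.ofReal_add, Complex.ofReal_natCast] at h
  exact h

theorem gammaRatioSum_ofReal (hx₁ : -1 / 4 < x) (hx₂ : x < 1 / 4) (hs : 1 / 4 ≤ s) :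
    gammaRatioSum x s = ((Real.Gamma (s + x) / Real.Gamma (s + 1 - x)) ^ 3 *
      ∑' k, (pochR (s + x) k / pochR (s + 1 - x) k) ^ 3 : ℝ) := by
  rw [gammaRatioSum, ← tsum_mul_left, Complex.ofReal_tsum]
  refine tsum_congr fun k => ?_
  rw [gammaRatio_ofReal_add_natCast hx₁ hx₂ hs, ← Complex.ofReal_pow, mul_pow]

theorem summable_pochR_div_pochR_pow_three (hx₁ : -1 / 4 < x) (hx₂ : x < 1 / 4)
    (hs : 1 / 4 ≤ s) : Summable fun k => (pochR (s + x) k / pochR (s + 1 - x) k) ^ 3 := by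
  have h : Summable fun k : ℕ => gammaRatio x (s + k) ^ 3 :=
    .of_norm_bounded (summable_gammaRatioBound_pow_three hx₁ hx₂)
      (norm_gammaRatio_pow_three_le hx₁ hx₂ hs)
  have hne : Real.Gamma (s + x) / Real.Gamma (s + 1 - x) ≠ 0 :=
    div_ne_zero (Real.Gamma_pos_of_pos (by linarith)).ne'
      (Real.Gamma_pos_of_pos (by linarith)).ne'
  simp only [gammaRatio_ofReal_add_natCast hx₁ hx₂ hs, ← Complex.ofReal_pow, mul_pow] at h
  exact (summable_mul_left_iff (pow_ne_zero 3 hne)).1 (Complex.summable_ofReal.1 h)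

end RealValues

section OneAdd

variable {x : ℝ}

theorem wzSum_one_add (hx : -1 / 2 < x) : wzSum x (1 + x) = wzCoeff x 0 * (2 / 3 * x ^ 2) := by
  have hvanish : ∀ n ≠ 0, wzTerm x n (1 + x) = 0 := fun n hn => by
    rw [wzTerm, pochQuot, Finset.prod_eq_zero (Finset.mem_range.2 (Nat.pos_of_ne_zero hn))
      (by simp)]
    simp
  have hpoly : wzPoly x (1 + x) = 2 / 3 * x ^ 2 := by
    obtain ⟨d, rfl⟩ : ∃ d, x = (d - 1) / 2 := ⟨2 * x + 1, by ring⟩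
    have hd : (d : ℂ) ≠ 0 := Complex.ofReal_ne_zero.2 (by linarith)
    rw [wzPoly]
    push_cast
    rw [mul_div_cancel₀ _ two_ne_zero, sub_add_cancel]
    field_simp
    ring
  rw [wzSum, tsum_eq_single 0 hvanish, wzTerm, pochQuot_zero, Nat.cast_zero, zero_add, hpoly,
    one_pow, mul_one]

theorem eight_mul_pow_three_mul_gammaRatioSum_one_add (hx : x ≠ 0) (hx₁ : -1 / 4 < x)
    (hx₂ : x < 1 / 4) : 8 * x ^ 3 * gammaRatioSum x (1 + x) = (Real.Gamma (1 + 2 * x) ^ 3 *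
      (Real.Gamma (1 + x) * Real.Gamma (1 - 3 * x) /
        (Real.Gamma (1 + 2 * x) * Real.Gamma (1 - 2 * x) * Real.Gamma (1 - x) ^ 2) - 1) : ℝ) := by
  have hshift : ∀ k, (pochR (2 * x) (k + 1) / pochR 1 (k + 1)) ^ 3 =
      8 * x ^ 3 * (pochR (1 + x + x) k / pochR (1 + x + 1 - x) k) ^ 3 := fun k => by
    rw [pochR_succ, pochR_succ, ← mul_pochR_add_one, ← mul_pochR_add_one,
      show 1 + x + x = 2 * x + 1 by ring, show 1 + x + 1 - x = 1 + 1 by ring]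
    ring
  have hdixon := (hasSum_nat_add_iff' 1).2 (hasSum_pochR_two_mul_div_pow_three hx hx₁ hx₂)
  simp only [hshift, Finset.sum_range_one, pochR_zero, div_one, one_pow] at hdixon
  have hsum := gammaRatioSum_ofReal hx₁ hx₂ (s := 1 + x) (by linarith)
  have hGamma : Real.Gamma (1 + x + x) / Real.Gamma (1 + x + 1 - x) = Real.Gamma (1 + 2 * x) := by
    rw [show 1 + x + x = 1 + 2 * x by ring, show 1 + x + 1 - x = 2 by ring, Real.Gamma_two,
      div_one]
  rw [hGamma, Complex.ofReal_add, Complex.ofReal_one] at hsum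
  rw [hsum, ← hdixon.tsum_eq, tsum_mul_left]
  push_cast
  ring

theorem wzFun_one_add (hx : x ≠ 0) (hx₁ : -1 / 4 < x) (hx₂ : x < 1 / 4) :
    wzFun x (1 + x) = (2 / 3 * x ^ 2 * wzCoeff x 0 * Real.Gamma (1 + 2 * x) ^ 3 *
      (Real.Gamma (1 + x) * Real.Gamma (1 - 3 * x) /
        (Real.Gamma (1 + 2 * x) * Real.Gamma (1 - 2 * x) * Real.Gamma (1 - x) ^ 2)) : ℝ) := by
  have hratio : gammaRatio x (1 + x) = Real.Gamma (1 + 2 * x) := by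
    have h := gammaRatio_ofReal x (1 + x)
    rwa [show 1 + x + x = 1 + 2 * x by ring, show 1 + x + 1 - x = 2 by ring, Real.Gamma_two,
      div_one, Complex.ofReal_add, Complex.ofReal_one] at h
  have hsum := eight_mul_pow_three_mul_gammaRatioSum_one_add hx hx₁ hx₂
  rw [wzFun, wzSum_one_add (by linarith), hratio]
  push_cast at hsum ⊢
  linear_combination 2 / 3 * (x : ℂ) ^ 2 * wzCoeff x 0 * hsum

theorem wzFun_one_add_mul (hx : x ≠ 0) (hx₁ : -1 / 4 < x) (hx₂ : x < 1 / 4) :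
    wzFun x (1 + x) *
      (Real.pi ^ 2 * (4 * Real.cos (Real.pi * x) ^ 4 - Real.cos (Real.pi * x) ^ 2) : ℝ) =
    (2 * Real.sin (Real.pi * x) ^ 2 *
      (Real.Gamma (1 / 2 + x) / Real.Gamma (1 / 2 - x)) ^ 3 : ℝ) := by
  have h₁ : 0 < Real.Gamma (1 + x) := Real.Gamma_pos_of_pos (by linarith)
  have h₂ : 0 < Real.Gamma (1 - x) := Real.Gamma_pos_of_pos (by linarith)
  have h₃ : 0 < Real.Gamma (1 + 2 * x) := Real.Gamma_pos_of_pos (by linarith)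
  have h₄ : 0 < Real.Gamma (1 - 2 * x) := Real.Gamma_pos_of_pos (by linarith)
  have h₅ : 0 < Real.Gamma (1 + 3 * x) := Real.Gamma_pos_of_pos (by linarith)
  have h₆ : 0 < Real.Gamma (1 - 3 * x) := Real.Gamma_pos_of_pos (by linarith)
  have hsqrt : √Real.pi ≠ 0 := (Real.sqrt_pos.2 Real.pi_pos).ne'
  have hpi : Real.pi = √Real.pi ^ 2 := (Real.sq_sqrt Real.pi_pos.le).symm
  have hfactor : 4 * Real.cos (Real.pi * x) ^ 4 - Real.cos (Real.pi * x) ^ 2 =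
      Real.cos (Real.pi * x) ^ 2 * (4 * Real.cos (Real.pi * x) ^ 2 - 1) := by ring
  rw [wzFun_one_add hx hx₁ hx₂, ← Complex.ofReal_mul, Complex.ofReal_inj, hfactor,
    four_mul_cos_pi_mul_sq_sub_one_eq hx (by linarith) (by linarith),
    cos_pi_mul_eq hx (by linarith) (by linarith), sin_pi_mul_eq (by linarith) (by linarith),
    Gamma_half_sub_eq (by linarith), wzCoeff_zero_right (by linarith)]
  generalize √Real.pi = r at *
  rw [hpi]
  field_simp

end OneAdd

section Half

variable {x : ℝ}

/-- The series on the left-hand side of the theorem, without the factor `1/48`. -/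
noncomputable def piSeries (x : ℝ) : ℝ :=
  ∑' n : ℕ, wzCoeff x n * (74 * ((n : ℝ) + x) ^ 2 + 27 * ((n : ℝ) + x) + 3)

/-- The non-trigonometric term on the right-hand side of the theorem. -/
noncomputable def piRemainder (x : ℝ) : ℝ :=
  wzCoeff x 0 * (128 * x ^ 5 / (3 * (2 * x - 1) ^ 3)) *
    ∑' n : ℕ, (pochR (1 / 2 + x) n / pochR (3 / 2 - x) n) ^ 3

theorem summable_pochR_half_add_div_pow_three (hx₁ : -1 / 4 < x) (hx₂ : x < 1 / 4) :
    Summable fun n => (pochR (1 / 2 + x) n / pochR (3 / 2 - x) n) ^ 3 := by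
  have h := summable_pochR_div_pochR_pow_three hx₁ hx₂ (s := 1 / 2) (by norm_num)
  norm_num at h ⊢
  exact h

theorem wzTerm_half (hx₁ : -1 / 2 < x) (n : ℕ) : wzTerm x n (1 / 2) =
    (1 / 48 * (wzCoeff x n * (74 * (n + x) ^ 2 + 27 * (n + x) + 3)) : ℝ) := by
  have hquot : pochQuot x n (1 / 2) (1 - 1 / 2) = 1 := by
    refine Finset.prod_eq_one fun m _ => ?_
    have hne : (1 / 2 + x + m : ℂ) ≠ 0 := by
      have h : ((1 / 2 + x + m : ℝ) : ℂ) ≠ 0 :=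
        Complex.ofReal_ne_zero.2 (by linarith [m.cast_nonneg (α := ℝ)])
      push_cast at h
      exact h
    rw [sub_half, ← sq, div_self (pow_ne_zero 2 hne)]
  rw [wzTerm, hquot, wzPoly]
  push_cast
  ring

theorem summable_wzCoeff_mul (hx₁ : -1 / 4 < x) (hx₂ : x < 1 / 4) :
    Summable fun n : ℕ => wzCoeff x n * (74 * ((n : ℝ) + x) ^ 2 + 27 * ((n : ℝ) + x) + 3) := by
  have h := summable_wzTerm hx₁ hx₂ (z := 1 / 2) (by norm_num) (by norm_num)
  simp only [wzTerm_half (x := x) (by linarith)] at h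
  exact (summable_mul_left_iff (by norm_num)).1 (Complex.summable_ofReal.1 h)

theorem wzSum_half (hx₁ : -1 / 2 < x) : wzSum x (1 / 2) = (1 / 48 * piSeries x : ℝ) := by
  rw [wzSum, piSeries, ← tsum_mul_left, Complex.ofReal_tsum]
  exact tsum_congr (wzTerm_half hx₁)

theorem Gamma_half_add_div_Gamma (hx : x ≠ 1 / 2) :
    Real.Gamma (1 / 2 + x) / Real.Gamma (1 / 2 + 1 - x) =
      Real.Gamma (1 / 2 + x) / Real.Gamma (1 / 2 - x) / (1 / 2 - x) := by
  rw [add_sub_right_comm, Real.Gamma_add_one (sub_ne_zero.2 hx.symm), div_div, mul_comm]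

theorem wzFun_half (hx₁ : -1 / 4 < x) (hx₂ : x < 1 / 4) :
    wzFun x (1 / 2) = ((Real.Gamma (1 / 2 + x) / Real.Gamma (1 / 2 - x)) ^ 3 *
      (1 / 48 * piSeries x - piRemainder x) : ℝ) := by
  have hne : x ≠ 1 / 2 := by linarith
  have hsub : (1 / 2 - x : ℂ) ≠ 0 := by
    have h : ((1 / 2 - x : ℝ) : ℂ) ≠ 0 := Complex.ofReal_ne_zero.2 (by linarith)
    push_cast at h
    exact h
  have hratio := gammaRatio_ofReal x (1 / 2)
  have hsum := gammaRatioSum_ofReal hx₁ hx₂ (s := 1 / 2) (by norm_num)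
  rw [Gamma_half_add_div_Gamma hne] at hratio hsum
  rw [show (1 / 2 + 1 : ℝ) = 3 / 2 by norm_num] at hsum
  rw [show ((1 / 2 : ℝ) : ℂ) = 1 / 2 by push_cast; rfl] at hratio hsum
  rw [wzFun, hratio, hsum, wzSum_half (by linarith), piRemainder]
  generalize Real.Gamma (1 / 2 + x) / Real.Gamma (1 / 2 - x) = r
  push_cast
  rw [show (2 * x - 1 : ℂ) = -2 * (1 / 2 - x) by ring]
  generalize (1 / 2 - x : ℂ) = d at hsub ⊢
  field_simp
  ring

theorem piSeries_eq_of_ne_zero (hx : x ≠ 0) (hx₁ : -1 / 4 < x) (hx₂ : x < 1 / 4) :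
    1 / 48 * piSeries x = 1 / Real.pi ^ 2 *
      ((8 * Real.cos (Real.pi * x) ^ 4 - 8 * Real.cos (Real.pi * x) ^ 2 + 3) /
        (4 * Real.cos (Real.pi * x) ^ 4 - Real.cos (Real.pi * x) ^ 2)) + piRemainder x := by
  have hratio : Real.Gamma (1 / 2 + x) / Real.Gamma (1 / 2 - x) ≠ 0 :=
    div_ne_zero (Real.Gamma_pos_of_pos (by linarith)).ne'
      (Real.Gamma_pos_of_pos (by linarith)).ne'
  have hsin : Real.sin (Real.pi * x) ≠ 0 :=
    sin_pi_mul_ne_zero_of_lt hx (by linarith) (by linarith)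
  have hone_add := wzFun_one_add_mul hx hx₁ hx₂
  have hhalf := wzFun_half_mul hx hx₁ hx₂
  rw [wzFun_half hx₁ hx₂] at hhalf
  generalize Real.Gamma (1 / 2 + x) / Real.Gamma (1 / 2 - x) = r at hratio hone_add hhalf
  generalize Real.sin (Real.pi * x) = σ at hsin hone_add hhalf
  have hne : 2 * σ ^ 2 * r ^ 3 ≠ 0 := by positivity
  have hden : Real.pi ^ 2 *
      (4 * Real.cos (Real.pi * x) ^ 4 - Real.cos (Real.pi * x) ^ 2) ≠ 0 :=
    Complex.ofReal_ne_zero.1 (right_ne_zero_of_mul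
      (hone_add.trans_ne (Complex.ofReal_ne_zero.2 hne)))
  have hprod : r ^ 3 * (1 / 48 * piSeries x - piRemainder x) * (2 * σ ^ 2) *
      (Real.pi ^ 2 * (4 * Real.cos (Real.pi * x) ^ 4 - Real.cos (Real.pi * x) ^ 2)) =
      2 * σ ^ 2 * r ^ 3 *
        (8 * Real.cos (Real.pi * x) ^ 4 - 8 * Real.cos (Real.pi * x) ^ 2 + 3) := by
    rw [← Complex.ofReal_inj, Complex.ofReal_mul, Complex.ofReal_mul, hhalf, mul_right_comm,
      hone_add, ← Complex.ofReal_mul]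
  rw [← sub_eq_iff_eq_add, div_mul_div_comm, one_mul, eq_div_iff hden]
  refine mul_left_cancel₀ hne ?_
  rw [← hprod]
  ring

end Half

section Continuity

theorem continuousAt_pochG {a t : ℝ} (hat : 0 < a + t) : ContinuousAt (pochG a) t := by
  have hGamma : ContinuousAt Real.Gamma (a + t) :=
    (Real.differentiableAt_Gamma fun m => by
      linarith [m.cast_nonneg (α := ℝ)]).continuousAt
  exact (ContinuousAt.comp (f := fun t => a + t) hGamma (by fun_prop)).div_const _

theorem continuousAt_wzCoeff {x : ℝ} (hx₁ : -1 / 4 < x) (n : ℕ) :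
    ContinuousAt (fun y => wzCoeff y n) x := by
  have : (0 : ℝ) ≤ n := n.cast_nonneg
  have hpoch : ∀ a : ℝ, 1 / 4 < a → ContinuousAt (fun y : ℝ => pochG a (n + y)) x := fun a ha =>
    ContinuousAt.comp (f := fun y : ℝ => (n : ℝ) + y)
      (continuousAt_pochG (by linarith)) (by fun_prop)
  have hpow : ContinuousAt (fun y : ℝ => (3 / 4 : ℝ) ^ ((3 : ℝ) * ((n : ℝ) + y))) x :=
    (Real.continuous_const_rpow (by norm_num)).continuousAt.comp (by fun_prop)
  exact hpow.mul (((((hpoch _ (by norm_num)).pow 3).mul (hpoch _ (by norm_num))).mul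
    (hpoch _ (by norm_num))).div ((hpoch _ (by norm_num)).pow 5)
      (pow_ne_zero 5 (pochG_pos one_pos (by linarith)).ne'))

theorem continuousAt_piSeries_zero : ContinuousAt piSeries 0 := by
  refine tendsto_tsum_of_dominated_convergence
    ((summable_wzTerm_bound 2).mul_left ((wzCoeff 0 0 + 1) * 104)) (fun n => ?_) ?_
  · exact ((continuousAt_wzCoeff (by norm_num) n).mul (by fun_prop)).tendsto
  · filter_upwards [(continuousAt_wzCoeff (by norm_num) 0).eventually_le_const (lt_add_one _),
      Ioo_mem_nhds (by norm_num : (-1 / 4 : ℝ) < 0) (by norm_num : (0 : ℝ) < 1 / 4)]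
      with x hx hI n
    have : (0 : ℝ) ≤ n := n.cast_nonneg
    have : 0 < wzCoeff 0 0 := wzCoeff_pos (by norm_num) 0
    have hquad₀ : 0 ≤ 74 * ((n : ℝ) + x) ^ 2 + 27 * (n + x) + 3 := by
      nlinarith [sq_nonneg (148 * ((n : ℝ) + x) + 27)]
    have hquad : 74 * ((n : ℝ) + x) ^ 2 + 27 * (n + x) + 3 ≤ 104 * (n + 2) ^ 2 := by
      nlinarith [hI.1, hI.2]
    rw [Real.norm_of_nonneg (mul_nonneg (wzCoeff_pos hI.1 n).le hquad₀)]
    calc _ ≤ (wzCoeff 0 0 + 1) * (27 / 64) ^ n * (104 * ((n : ℝ) + 2) ^ 2) := by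
          refine mul_le_mul ((wzCoeff_le hI.1 n).trans ?_) hquad hquad₀ (by positivity)
          gcongr
      _ = _ := by ring

theorem pochR_le_pochR {a b : ℝ} (ha : 0 ≤ a) (hab : a ≤ b) (n : ℕ) : pochR a n ≤ pochR b n :=
  Finset.prod_le_prod (fun _ _ => by positivity) fun _ _ => by gcongr

theorem tendsto_piRemainder_zero : Tendsto piRemainder (𝓝 0) (𝓝 0) := by
  have hcoeff : Tendsto (fun x : ℝ => wzCoeff x 0 * (128 * x ^ 5 / (3 * (2 * x - 1) ^ 3)))
      (𝓝 0) (𝓝 0) := by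
    have : ContinuousAt (fun x : ℝ => wzCoeff x 0 * (128 * x ^ 5 / (3 * (2 * x - 1) ^ 3))) 0 :=
      (continuousAt_wzCoeff (by norm_num) 0).mul
        (ContinuousAt.div (by fun_prop) (by fun_prop) (by norm_num))
    simpa [ContinuousAt] using this
  refine hcoeff.zero_mul_isBoundedUnder_le (isBoundedUnder_of_eventually_le
    (a := ∑' n : ℕ, (pochR (1 / 2 + 1 / 8) n / pochR (3 / 2 - 1 / 8) n) ^ 3) ?_)
  filter_upwards [Ioo_mem_nhds (by norm_num : (-1 / 4 : ℝ) < 0) (by norm_num : (0 : ℝ) < 1 / 8)]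
    with x ⟨hx₁, hx₂⟩
  have hnum : ∀ n, 0 ≤ pochR (1 / 2 + x) n := fun n => (pochR_pos (by linarith) n).le
  have hden : ∀ n, 0 < pochR (3 / 2 - 1 / 8) n := pochR_pos (by norm_num)
  have hmono : ∀ n, pochR (3 / 2 - 1 / 8) n ≤ pochR (3 / 2 - x) n :=
    pochR_le_pochR (by norm_num) (by linarith)
  have hquot : ∀ n, 0 ≤ pochR (1 / 2 + x) n / pochR (3 / 2 - x) n := fun n =>
    div_nonneg (hnum n) ((hden n).le.trans (hmono n))
  rw [Function.comp_apply, Real.norm_of_nonneg (tsum_nonneg fun n => pow_nonneg (hquot n) 3)]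
  refine (summable_pochR_half_add_div_pow_three hx₁ (by linarith)).tsum_le_tsum
    (fun n => pow_le_pow_left₀ (hquot n) ?_ 3)
    (summable_pochR_half_add_div_pow_three (by norm_num) (by norm_num))
  exact div_le_div₀ (pochR_pos (by norm_num) n).le (pochR_le_pochR (by linarith) (by linarith) n)
    (hden n) (hmono n)

theorem piSeries_zero : 1 / 48 * piSeries 0 = 1 / Real.pi ^ 2 := by
  have hcos : Tendsto (fun x : ℝ => 1 / Real.pi ^ 2 *
      ((8 * Real.cos (Real.pi * x) ^ 4 - 8 * Real.cos (Real.pi * x) ^ 2 + 3) /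
        (4 * Real.cos (Real.pi * x) ^ 4 - Real.cos (Real.pi * x) ^ 2))) (𝓝 0)
      (𝓝 (1 / Real.pi ^ 2)) := by
    have : ContinuousAt (fun x : ℝ => 1 / Real.pi ^ 2 *
      ((8 * Real.cos (Real.pi * x) ^ 4 - 8 * Real.cos (Real.pi * x) ^ 2 + 3) /
        (4 * Real.cos (Real.pi * x) ^ 4 - Real.cos (Real.pi * x) ^ 2))) 0 :=
      continuousAt_const.mul (ContinuousAt.div (by fun_prop) (by fun_prop) (by norm_num))
    convert this.tendsto using 2
    norm_num
  have hright := (hcos.add tendsto_piRemainder_zero).mono_left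
    (nhdsWithin_le_nhds (s := {0}ᶜ))
  have hleft := (continuousAt_piSeries_zero.tendsto.const_mul (1 / 48)).mono_left
    (nhdsWithin_le_nhds (s := {0}ᶜ))
  rw [add_zero] at hright
  refine tendsto_nhds_unique (hleft.congr' ?_) hright
  filter_upwards [self_mem_nhdsWithin, mem_nhdsWithin_of_mem_nhds
    (Ioo_mem_nhds (by norm_num : (-1 / 4 : ℝ) < 0) (by norm_num : (0 : ℝ) < 1 / 4))] with x hx hI
  exact piSeries_eq_of_ne_zero hx hI.1 hI.2

end Continuity

/-- For `-1/4 < x < 1/4`,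
`(1/48) ∑_{n≥0} (3/4)^{3(n+x)} (1/2)_{n+x}³(1/3)_{n+x}(2/3)_{n+x}/(1)_{n+x}⁵ (74(n+x)²+27(n+x)+3)
 = (1/π²)(8cos⁴πx - 8cos²πx + 3)/(4cos⁴πx - cos²πx)
   + (3/4)^{3x} (1/2)_x³(1/3)_x(2/3)_x/(1)_x⁵ · 128x⁵/(3(2x-1)³) ·
     ∑_{n≥0} ((1/2+x)_n/(3/2-x)_n)³`. -/
theorem identity_pi2_2 (x : ℝ) (hx1 : -1/4 < x) (hx2 : x < 1/4) :
    Summable (fun n : ℕ =>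
      (3/4 : ℝ) ^ ((3 : ℝ) * ((n : ℝ) + x)) *
        (pochG (1/2) ((n : ℝ) + x) ^ 3 * pochG (1/3) ((n : ℝ) + x) *
          pochG (2/3) ((n : ℝ) + x) / pochG 1 ((n : ℝ) + x) ^ 5) *
        (74 * ((n : ℝ) + x) ^ 2 + 27 * ((n : ℝ) + x) + 3)) ∧
    Summable (fun n : ℕ =>
      (pochR (1/2 + x) n / pochR (3/2 - x) n) ^ 3) ∧
    (1/48 : ℝ) * (∑' n : ℕ,
        (3/4 : ℝ) ^ ((3 : ℝ) * ((n : ℝ) + x)) *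
          (pochG (1/2) ((n : ℝ) + x) ^ 3 * pochG (1/3) ((n : ℝ) + x) *
            pochG (2/3) ((n : ℝ) + x) / pochG 1 ((n : ℝ) + x) ^ 5) *
          (74 * ((n : ℝ) + x) ^ 2 + 27 * ((n : ℝ) + x) + 3))
      = (1 / Real.pi ^ 2) *
          ((8 * Real.cos (Real.pi * x) ^ 4 - 8 * Real.cos (Real.pi * x) ^ 2 + 3) /
            (4 * Real.cos (Real.pi * x) ^ 4 - Real.cos (Real.pi * x) ^ 2)) +
        (3/4 : ℝ) ^ ((3 : ℝ) * x) *
          (pochG (1/2) x ^ 3 * pochG (1/3) x * pochG (2/3) x / pochG 1 x ^ 5) *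
          (128 * x ^ 5 / (3 * (2 * x - 1) ^ 3)) *
          ∑' n : ℕ, (pochR (1/2 + x) n / pochR (3/2 - x) n) ^ 3 := by
  refine ⟨summable_wzCoeff_mul hx1 hx2, summable_pochR_half_add_div_pow_three hx1 hx2, ?_⟩
  rcases eq_or_ne x 0 with rfl | hx
  · refine piSeries_zero.trans ?_
    norm_num
  · refine (piSeries_eq_of_ne_zero hx hx1 hx2).trans ?_
    simp only [piRemainder, wzCoeff, Nat.cast_zero, zero_add]
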